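/- Let 𝒳, 𝒴 be Polish spaces, r ∈ [1,∞), μ ∈ 𝒫_r(𝒳), ν ∈ 𝒫_r(𝒴), and let C : 𝒳 × 𝒫_r(𝒴) → ℝ ∪ {+∞} be lower semicontinuous such that there exist a constant K > 0 and (x₀,y₀) ∈ 𝒳 × 𝒴 with C(x,p) ≥ −K(1 + d_𝒳(x,x₀)^r + 𝒲_r(p,δ_{y₀})^r) for all (x,p). Then inf_{P ∈ Λ(μ,ν)} ∫ C(x,p) P(dx,dp) = sup_{ψ ∈ Φ_r(𝒴)} [ ν(ψ) + ∫ R_Cψ(x) μ(dx) ] = sup{ μ(φ) + ν(ψ) : φ ∈ Φ_r(𝒳), ψ ∈ Φ_r(𝒴), φ(x) + p(ψ) ≤ C(x,p) for all (x,p) ∈ 𝒳 × 𝒫_r(𝒴) }. -/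

import Mathlib

open MeasureTheory Set Filter
open scoped ENNReal NNReal Topology RealInnerProductSpace

noncomputable section

namespace WOT

/-- The set of couplings of `μ` and `ν`. -/
def Couplings {X Y : Type*} [MeasurableSpace X] [MeasurableSpace Y]
    (μ : Measure X) (ν : Measure Y) : Set (Measure (X × Y)) :=
  {π | π.map Prod.fst = μ ∧ π.map Prod.snd = ν}

/-- `K` is a disintegration of `π` with respect to its first marginal `μ`. -/
def IsDisint {X Y : Type*} [MeasurableSpace X] [MeasurableSpace Y]
    (π : Measure (X × Y)) (μ : Measure X) (K : X → Measure Y) : Prop :=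
  Measurable K ∧ (∀ x, IsProbabilityMeasure (K x)) ∧
    ∀ s : Set (X × Y), MeasurableSet s → π s = ∫⁻ x, K x (Prod.mk x ⁻¹' s) ∂μ

/-- The intensity `I(Q)` of a measure on measures. -/
def intensity {Y : Type*} [MeasurableSpace Y] (Q : Measure (Measure Y)) : Measure Y :=
  Q.join

/-- The intensity map `Î`. -/
def intensityHat {X Y : Type*} [MeasurableSpace X] [MeasurableSpace Y]
    (P : Measure (X × Measure Y)) : Measure (X × Y) :=
  P.bind fun xp => (Measure.dirac xp.1).prod xp.2

/-- `Λ(μ,ν)`, the set of probability measures on `X × 𝒫(Y)` whose intensity is a coupling. -/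
def Lambda {X Y : Type*} [MeasurableSpace X] [MeasurableSpace Y]
    (μ : Measure X) (ν : Measure Y) : Set (Measure (X × Measure Y)) :=
  {P | IsProbabilityMeasure P ∧ (∀ᵐ xp ∂P, IsProbabilityMeasure xp.2) ∧
    intensityHat P ∈ Couplings μ ν}

/-- Finite `r`-th moment. -/
def FinMom {X : Type*} [MeasurableSpace X] [PseudoMetricSpace X]
    (r : ℝ) (x₀ : X) (μ : Measure X) : Prop :=
  ∫⁻ x, ENNReal.ofReal (dist x x₀ ^ r) ∂μ < ⊤

/-- The growth class `Φ_r`. -/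
def PhiR {X : Type*} [PseudoMetricSpace X] (r : ℝ) (x₀ : X) : Set (X → ℝ) :=
  {φ | Continuous φ ∧ ∃ K : ℝ, ∀ x, |φ x| ≤ K * (1 + dist x x₀ ^ r)}

/-- The `r`-Wasserstein distance (valued in `ℝ≥0∞`). -/
def Wr {Y : Type*} [MeasurableSpace Y] [PseudoMetricSpace Y]
    (r : ℝ) (p q : Measure Y) : ℝ≥0∞ :=
  ⨅ π ∈ Couplings p q, (∫⁻ z : Y × Y, ENNReal.ofReal (dist z.1 z.2 ^ r) ∂π) ^ (1 / r)

/-- `𝒫_r(Y)`: probability measures with finite `r`-th moment. -/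
def Pr {Y : Type*} [MeasurableSpace Y] [PseudoMetricSpace Y] (r : ℝ) (y₀ : Y) :
    Set (Measure Y) :=
  {p | IsProbabilityMeasure p ∧ FinMom r y₀ p}

/-- `𝒫_r(𝒫_r(Y))`: probability measures on `𝒫_r(Y)` with finite `r`-th moment w.r.t. `𝒲_r`. -/
def PrP {Y : Type*} [MeasurableSpace Y] [PseudoMetricSpace Y] (r : ℝ) (y₀ : Y) :
    Set (Measure (Measure Y)) :=
  {Q | IsProbabilityMeasure Q ∧ (∀ᵐ p ∂Q, p ∈ Pr r y₀) ∧
    ∫⁻ p, Wr r p (Measure.dirac y₀) ^ r ∂Q < ⊤}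

/-- The positive part of an extended real, valued in `ℝ≥0∞`. -/
def epos (e : EReal) : ℝ≥0∞ := if e = ⊤ then ⊤ else ENNReal.ofReal e.toReal

/-- Extended-real integral: positive part minus negative part (with value `⊥` when
both parts are infinite, i.e. when the integral is not well-defined). -/
def eInt {X : Type*} [MeasurableSpace X] (f : X → EReal) (μ : Measure X) : EReal :=
  ((∫⁻ x, epos (f x) ∂μ : ℝ≥0∞) : EReal) - ((∫⁻ x, epos (-(f x)) ∂μ : ℝ≥0∞) : EReal)

/-- Extended-real integral with the opposite (`⊤`) convention for ill-defined integrals. -/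
def eIntU {X : Type*} [MeasurableSpace X] (f : X → EReal) (μ : Measure X) : EReal :=
  -eInt (fun x => -(f x)) μ

/-- The extended-real integral is well-defined. -/
def eIntWellDef {X : Type*} [MeasurableSpace X] (f : X → EReal) (μ : Measure X) : Prop :=
  (∫⁻ x, epos (f x) ∂μ ≠ ⊤) ∨ (∫⁻ x, epos (-(f x)) ∂μ ≠ ⊤)

/-- Convergence in the `r`-Wasserstein distance. -/
def WrTendsto {Y : Type*} [MeasurableSpace Y] [PseudoMetricSpace Y]
    (r : ℝ) (ps : ℕ → Measure Y) (p : Measure Y) : Prop :=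
  Tendsto (fun n => Wr r (ps n) p) atTop (nhds 0)

/-- (Sequential) lower semicontinuity on `𝒫_r(Y)` w.r.t. `𝒲_r`. -/
def LscWr1 {Y : Type*} [MeasurableSpace Y] [PseudoMetricSpace Y]
    (r : ℝ) (y₀ : Y) (G : Measure Y → EReal) : Prop :=
  ∀ (p : Measure Y) (ps : ℕ → Measure Y), p ∈ Pr r y₀ → (∀ n, ps n ∈ Pr r y₀) →
    WrTendsto r ps p → G p ≤ liminf (fun n => G (ps n)) atTop

/-- (Sequential) upper semicontinuity on `𝒫_r(Y)` w.r.t. `𝒲_r`. -/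
def UscWr1 {Y : Type*} [MeasurableSpace Y] [PseudoMetricSpace Y]
    (r : ℝ) (y₀ : Y) (G : Measure Y → EReal) : Prop :=
  ∀ (p : Measure Y) (ps : ℕ → Measure Y), p ∈ Pr r y₀ → (∀ n, ps n ∈ Pr r y₀) →
    WrTendsto r ps p → limsup (fun n => G (ps n)) atTop ≤ G p

/-- (Sequential) lower semicontinuity on `X × 𝒫_r(Y)` w.r.t. `d_X × 𝒲_r`. -/
def LscWr {X Y : Type*} [TopologicalSpace X] [MeasurableSpace Y] [PseudoMetricSpace Y]
    (r : ℝ) (y₀ : Y) (C : X × Measure Y → EReal) : Prop :=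
  ∀ (x : X) (xs : ℕ → X) (p : Measure Y) (ps : ℕ → Measure Y),
    p ∈ Pr r y₀ → (∀ n, ps n ∈ Pr r y₀) → Tendsto xs atTop (nhds x) → WrTendsto r ps p →
    C (x, p) ≤ liminf (fun n => C (xs n, ps n)) atTop

/-- (Sequential) continuity of a real-valued cost on `X × 𝒫_r(Y)` w.r.t. `d_X × 𝒲_r`. -/
def ContWr {X Y : Type*} [TopologicalSpace X] [MeasurableSpace Y] [PseudoMetricSpace Y]
    (r : ℝ) (y₀ : Y) (C : X × Measure Y → ℝ) : Prop :=
  ∀ (x : X) (xs : ℕ → X) (p : Measure Y) (ps : ℕ → Measure Y),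
    p ∈ Pr r y₀ → (∀ n, ps n ∈ Pr r y₀) → Tendsto xs atTop (nhds x) → WrTendsto r ps p →
    Tendsto (fun n => C (xs n, ps n)) atTop (nhds (C (x, p)))

/-- Convexity of an extended-real-valued function on a set of measures. -/
def EConvexOn {Y : Type*} [MeasurableSpace Y] (S : Set (Measure Y)) (G : Measure Y → EReal) :
    Prop :=
  ∀ p ∈ S, ∀ q ∈ S, ∀ t : ℝ≥0, t ≤ 1 →
    G ((t : ℝ≥0∞) • p + ((1 - t : ℝ≥0) : ℝ≥0∞) • q)
      ≤ ((t : ℝ) : EReal) * G p + (((1 - t : ℝ≥0) : ℝ) : EReal) * G q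

/-- The lower semicontinuous convex envelope (on `𝒫_r(Y)` w.r.t. `𝒲_r`). -/
def cvxEnvWr {Y : Type*} [MeasurableSpace Y] [PseudoMetricSpace Y]
    (r : ℝ) (y₀ : Y) (f : Measure Y → EReal) : Measure Y → EReal :=
  fun p => ⨆ G ∈ {G : Measure Y → EReal |
    LscWr1 r y₀ G ∧ EConvexOn (Pr r y₀) G ∧ ∀ q ∈ Pr r y₀, G q ≤ f q}, G p

/-- The cost `C̃(x,p) = inf {∫ C(x,q) Q(dq) : Q ∈ 𝒫_r(𝒫_r(Y)), I(Q) = p}`. -/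
def tildeC {X Y : Type*} [MeasurableSpace X] [MeasurableSpace Y] [PseudoMetricSpace Y]
    (r : ℝ) (y₀ : Y) (C : X × Measure Y → EReal) : X × Measure Y → EReal :=
  fun xp => ⨅ Q ∈ {Q | Q ∈ PrP r y₀ ∧ intensity Q = xp.2}, eInt (fun q => C (xp.1, q)) Q

/-- The barycenter of a measure on a normed space. -/
def bary {E : Type*} [NormedAddCommGroup E] [NormedSpace ℝ E] [MeasurableSpace E]
    (p : Measure E) : E :=
  ∫ y, y ∂p

/-- Convex order of measures. -/
def ConvexOrder {E : Type*} [NormedAddCommGroup E] [NormedSpace ℝ E] [MeasurableSpace E]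
    (ν' ν : Measure E) : Prop :=
  ∀ θ : E → ℝ, ConvexOn ℝ Set.univ θ →
    eInt (fun y => ((θ y : ℝ) : EReal)) ν' ≤ eInt (fun y => ((θ y : ℝ) : EReal)) ν

/-- The inf-convolution `R_C ψ`. -/
def RC {X Y : Type*} [MeasurableSpace Y] [PseudoMetricSpace Y]
    (r : ℝ) (y₀ : Y) (C : X × Measure Y → EReal) (ψ : Y → ℝ) : X → EReal :=
  fun x => ⨅ p ∈ Pr r y₀, (((-∫ y, ψ y ∂p : ℝ) : EReal) + C (x, p))

/-- `κ` is a regular conditional distribution of `Yv` given the sub-σ-algebra `m1`. -/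
def IsRCD {Ω Y : Type*} [MeasurableSpace Y] (m1 : MeasurableSpace Ω)
    (mΩ : MeasurableSpace Ω) (P : @Measure Ω mΩ) (Yv : Ω → Y) (κ : Ω → Measure Y) : Prop :=
  (∀ ω, IsProbabilityMeasure (κ ω)) ∧ Measurable[m1] κ ∧
    ∀ A : Set Y, MeasurableSet A → ∀ B : Set Ω, MeasurableSet[m1] B →
      P (B ∩ Yv ⁻¹' A) = ∫⁻ ω in B, κ ω A ∂P

end WOT

open WOT


/-- Extension of a sequentially lower semicontinuous function through a map. -/
lemma exists_lsc_ext {A Z : Type*} [TopologicalSpace Z] [FirstCountableTopology Z]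
    (j : A → Z) (f : A → ℝ≥0∞)
    (hf : ∀ (a : A) (as : ℕ → A), Tendsto (fun n => j (as n)) atTop (𝓝 (j a)) →
      ∀ t : ℝ≥0∞, t ≠ ⊤ → (∀ n, f (as n) ≤ t) → f a ≤ t) :
    ∃ g : Z → ℝ≥0∞, LowerSemicontinuous g ∧ ∀ a, g (j a) = f a := by
  refine ⟨fun z => ⨆ V ∈ {V : Set Z | IsOpen V ∧ z ∈ V}, ⨅ a ∈ j ⁻¹' V, f a, ?_, ?_⟩
  · intro z t ht
    simp only [lt_iSup_iff] at ht
    obtain ⟨V, ⟨hV, hzV⟩, ht⟩ := ht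
    filter_upwards [hV.mem_nhds hzV] with z' hz'
    exact ht.trans_le (le_iSup₂_of_le V ⟨hV, hz'⟩ le_rfl)
  · intro a
    apply le_antisymm
    · exact iSup₂_le fun V hV => iInf₂_le a hV.2
    · by_contra! h
      obtain ⟨t, ht1, ht2⟩ := exists_between h
      obtain ⟨B, hB⟩ := (𝓝 (j a)).exists_antitone_basis
      have : ∀ n, ∃ a', j a' ∈ B n ∧ f a' ≤ t := by
        intro n
        by_contra! hn
        obtain ⟨V, hVB, hV, haV⟩ := mem_nhds_iff.1 (hB.mem n)
        refine absurd ht1 (not_lt.2 ?_)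
        refine le_iSup₂_of_le V ⟨hV, haV⟩ ?_
        exact le_iInf₂ fun a' ha' => (hn a' (hVB ha')).le
      choose as has using this
      have := hf a as (hB.tendsto fun n => (has n).1) t (ne_top_of_lt ht2) (fun n => (has n).2)
      exact absurd ht2 (not_lt.2 this)

lemma isClosed_lintegral_le {Z : Type*} [TopologicalSpace Z]
    [TopologicalSpace.PseudoMetrizableSpace Z] [TopologicalSpace.SeparableSpace Z]
    [MeasurableSpace Z] [OpensMeasurableSpace Z] {c : Z → ℝ≥0∞} (hc : LowerSemicontinuous c)
    (b : ℝ≥0∞) : IsClosed {Q : ProbabilityMeasure Z | ∫⁻ z, c z ∂(Q : Measure Z) ≤ b} := by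
  by_cases hb : b = ⊤
  · simp [hb]
  -- truncated version
  have key : ∀ N : ℕ, IsClosed {Q : ProbabilityMeasure Z |
      ∫⁻ z, min (c z) N ∂(Q : Measure Z) ≤ b} := by
    intro N
    apply IsSeqClosed.isClosed
    intro Qs Q hQs hQ
    simp only [mem_ofPred_eq] at hQs ⊢
    set f : Z → ℝ := fun z => (min (c z) N).toReal with hf
    have hfin : ∀ z, min (c z) (N : ℝ≥0∞) ≠ ⊤ := fun z =>
      ne_top_of_le_ne_top (ENNReal.natCast_ne_top N) (min_le_right _ _)
    have hfc : ∀ z, min (c z) (N : ℝ≥0∞) = ENNReal.ofReal (f z) := fun z =>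
      (ENNReal.ofReal_toReal (hfin z)).symm
    have hcm : Measurable fun z => min (c z) (N : ℝ≥0∞) :=
      hc.measurable.min measurable_const
    have hfm : Measurable f := hcm.ennreal_toReal
    have hopen : ∀ t : ℝ, 0 < t → IsOpen {a | t < f a} := by
      intro t ht
      have : {a | t < f a} = {a | ENNReal.ofReal t < c a} ∩ {a | ENNReal.ofReal t < N} := by
        ext a
        simp only [mem_ofPred_eq, mem_inter_iff, ← lt_min_iff]
        rw [hfc, ENNReal.ofReal_lt_ofReal_iff_of_nonneg ht.le]
      rw [this]
      exact (hc.isOpen_preimage _).inter isOpen_const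
    have hIntg : ∀ R' : ProbabilityMeasure Z, ∫⁻ z, min (c z) (N : ℝ≥0∞) ∂(R' : Measure Z)
        = ∫⁻ t in Ioi (0:ℝ), (R' : Measure Z) {a | t < f a} := fun R' => by
      rw [lintegral_congr hfc]
      exact lintegral_eq_lintegral_meas_lt _
        (Eventually.of_forall fun z => (ENNReal.toReal_nonneg : 0 ≤ f z)) hfm.aemeasurable
    simp only [hIntg] at hQs ⊢
    calc ∫⁻ t in Ioi (0:ℝ), (Q : Measure Z) {a | t < f a}
        ≤ ∫⁻ t in Ioi (0:ℝ), atTop.liminf (fun i ↦ (Qs i : Measure Z) {a | t < f a}) := by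
          refine setLIntegral_mono' measurableSet_Ioi fun t ht => ?_
          exact ProbabilityMeasure.le_liminf_measure_open_of_tendsto hQ (hopen t ht)
      _ ≤ atTop.liminf (fun i ↦ ∫⁻ t in Ioi (0:ℝ), (Qs i : Measure Z) {a | t < f a}) :=
          lintegral_liminf_le (fun n ↦ Antitone.measurable (fun s t hst ↦
            measure_mono (fun ω hω ↦ lt_of_le_of_lt hst hω)))
      _ ≤ b := by
          refine liminf_le_of_le (by isBoundedDefault) fun d hd => ?_
          obtain ⟨n, hn⟩ := hd.exists
          exact hn.trans (hQs n)
  have : {Q : ProbabilityMeasure Z | ∫⁻ z, c z ∂(Q : Measure Z) ≤ b}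
      = ⋂ N : ℕ, {Q : ProbabilityMeasure Z | ∫⁻ z, min (c z) N ∂(Q : Measure Z) ≤ b} := by
    ext Q
    simp only [mem_ofPred_eq, mem_iInter]
    constructor
    · exact fun h N => (lintegral_mono fun z => min_le_left _ _).trans h
    · intro h
      have h1 : ∀ z, c z = ⨆ N : ℕ, min (c z) N := by
        intro z
        rw [← inf_iSup_eq]
        simp [ENNReal.iSup_natCast]
      rw [lintegral_congr h1, lintegral_iSup (fun N => hc.measurable.min measurable_const)]
      · exact iSup_le h
      · intro N M hNM z
        exact min_le_min_left _ (by exact_mod_cast hNM)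
  rw [this]
  exact isClosed_iInter key

lemma lsc_lintegral {Z : Type*} [TopologicalSpace Z]
    [TopologicalSpace.PseudoMetrizableSpace Z] [TopologicalSpace.SeparableSpace Z]
    [MeasurableSpace Z] [OpensMeasurableSpace Z] {c : Z → ℝ≥0∞} (hc : LowerSemicontinuous c) :
    LowerSemicontinuous (fun Q : ProbabilityMeasure Z => ∫⁻ z, c z ∂(Q : Measure Z)) := by
  rw [lowerSemicontinuous_iff_isClosed_preimage]
  exact fun b => isClosed_lintegral_le hc b

lemma continuous_integral_pm {Z : Type*} [TopologicalSpace Z] [CompactSpace Z]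
    [MeasurableSpace Z] [OpensMeasurableSpace Z] (f : C(Z, ℝ)) :
    Continuous (fun Q : ProbabilityMeasure Z => ∫ z, f z ∂(Q : Measure Z)) := by
  rw [continuous_iff_continuousAt]
  intro Q
  have := (ProbabilityMeasure.tendsto_iff_forall_integral_tendsto (F := 𝓝 Q)
    (μs := fun Q => Q) (μ := Q)).1 tendsto_id (BoundedContinuousFunction.mkOfCompact f)
  exact this

lemma integral_eq_pint {Y : Type*} [MeasurableSpace Y] {ψ : Y → ℝ} {p : Measure Y}
    (h : Integrable ψ p) : ∫ y, ψ y ∂p = (∫⁻ y, ENNReal.ofReal (ψ y) ∂p).toReal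
      - (∫⁻ y, ENNReal.ofReal (-ψ y) ∂p).toReal :=
  integral_eq_lintegral_pos_part_sub_lintegral_neg_part h

lemma measurable_pint {Y : Type*} [MeasurableSpace Y] {ψ : Y → ℝ} (hψ : Measurable ψ) :
    Measurable (fun p : Measure Y => (∫⁻ y, ENNReal.ofReal (ψ y) ∂p).toReal
      - (∫⁻ y, ENNReal.ofReal (-ψ y) ∂p).toReal) :=
  (Measure.measurable_lintegral hψ.ennreal_ofReal).ennreal_toReal.sub
    (Measure.measurable_lintegral hψ.neg.ennreal_ofReal).ennreal_toReal

lemma borelSpace_pm (K : Type*) [TopologicalSpace K] [CompactSpace K]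
    [TopologicalSpace.MetrizableSpace K] [MeasurableSpace K] [BorelSpace K] :
    BorelSpace (ProbabilityMeasure K) := by
  let := TopologicalSpace.metrizableSpaceMetric K
  have : SecondCountableTopology K := inferInstance
  have hsep : TopologicalSpace.SeparableSpace C(K, ℝ) := inferInstance
  let F : ProbabilityMeasure K → ℕ → ℝ := fun Q k =>
    ∫ z, TopologicalSpace.denseSeq C(K, ℝ) k z ∂(Q : Measure K)
  have hF : Continuous F := continuous_pi fun k => continuous_integral_pm _
  have hFinj : Function.Injective F := by
    intro P Q hPQ
    have h1 : ∀ f : C(K, ℝ), ∫ z, f z ∂(P : Measure K) = ∫ z, f z ∂(Q : Measure K) := by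
      have hc : ∀ R : ProbabilityMeasure K, Continuous fun f : C(K, ℝ) => ∫ z, f z ∂(R : Measure K) := by
        intro R
        refine continuous_iff_continuousAt.2 fun f => ?_
        rw [ContinuousAt, tendsto_iff_norm_sub_tendsto_zero]
        refine squeeze_zero (fun _ => norm_nonneg _) (g := fun g => ‖g - f‖) (fun g => ?_) ?_
        · have hi : ∀ g : C(K, ℝ), Integrable (fun z => g z) (R : Measure K) := fun g =>
            (BoundedContinuousFunction.mkOfCompact g).integrable _
          rw [← integral_sub (hi g) (hi f)]
          refine (norm_integral_le_of_norm_le_const (C := ‖g - f‖)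
            (Eventually.of_forall fun z => ?_)).trans ?_
          · exact ContinuousMap.norm_coe_le_norm (g - f) z
          · simp
        · have : Tendsto (fun g : C(K, ℝ) => ‖g - f‖) (𝓝 f) (𝓝 ‖f - f‖) := by
            exact (Continuous.norm (continuous_id.sub continuous_const)).tendsto f
          simpa using this
      intro f
      exact congrFun ((hc P).ext_on (TopologicalSpace.denseRange_denseSeq C(K, ℝ)) (hc Q)
        (by rintro _ ⟨k, rfl⟩; exact congrFun hPQ k)) f
    have hP : IsFiniteMeasure (P : Measure K) := inferInstance
    have hQ : IsFiniteMeasure (Q : Measure K) := inferInstance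
    apply Subtype.ext
    change (P : Measure K) = (Q : Measure K)
    apply ext_of_forall_integral_eq_of_IsFiniteMeasure
    intro f
    exact h1 f.toContinuousMap
  have hemb : Topology.IsEmbedding F := (hF.isClosedEmbedding hFinj).isEmbedding
  have hFm : Measurable F := by
    refine measurable_pi_lambda _ fun k => ?_
    have h1 : (fun Q => F Q k) = (fun p : Measure K =>
        (∫⁻ y, ENNReal.ofReal (TopologicalSpace.denseSeq C(K, ℝ) k y) ∂p).toReal
      - (∫⁻ y, ENNReal.ofReal (-TopologicalSpace.denseSeq C(K, ℝ) k y) ∂p).toReal) ∘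
        (fun Q : ProbabilityMeasure K => (Q : Measure K)) := by
      ext Q
      exact integral_eq_pint ((BoundedContinuousFunction.mkOfCompact _).integrable _)
    rw [h1]
    exact (measurable_pint (ContinuousMap.continuous _).measurable).comp measurable_subtype_coe
  refine ⟨le_antisymm ?_ ?_⟩
  · have h2 : @Measurable _ _ (borel (ProbabilityMeasure K)) _
        (fun Q : ProbabilityMeasure K => (Q : Measure K)) := by
      let _ : MeasurableSpace (ProbabilityMeasure K) := borel _
      have : BorelSpace (ProbabilityMeasure K) := ⟨rfl⟩
      refine Measurable.measure_of_isPiSystem_of_isProbabilityMeasure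
        (S := {s : Set K | IsOpen s}) (BorelSpace.measurable_eq) isPiSystem_isOpen ?_
      intro s hs
      apply LowerSemicontinuous.measurable
      rw [lowerSemicontinuous_iff_le_liminf]
      intro Q
      exact ProbabilityMeasure.le_liminf_measure_open_of_tendsto tendsto_id hs
    exact measurable_iff_comap_le.1 h2
  · refine MeasurableSpace.generateFrom_le ?_
    intro U hU
    obtain ⟨V, hV, rfl⟩ := hemb.isInducing.isOpen_iff.1 hU
    exact hFm hV.measurableSet



section Analytic

lemma exists_approx_analytic {X : Type*} [TopologicalSpace X] [MeasurableSpace X]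
    (μ : Measure X) (f : (ℕ → ℕ) → X) (t : ℝ≥0∞) (ht : t < μ (range f)) :
    ∃ b : ℕ → ℕ, ∀ n, t < μ (f '' {x | ∀ i < n, x i ≤ b i}) := by
  have step : ∀ (A : Set (ℕ → ℕ)) (n : ℕ), t < μ (f '' A) →
      ∃ m, t < μ (f '' (A ∩ {x | x n ≤ m})) := by
    intro A n hA
    have h1 : f '' A = ⋃ m, f '' (A ∩ {x | x n ≤ m}) := by
      rw [← image_iUnion, ← inter_iUnion]
      congr 1
      ext x
      simp only [mem_inter_iff, mem_iUnion, mem_ofPred_eq]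
      exact ⟨fun h => ⟨h, x n, le_rfl⟩, fun h => h.1⟩
    rw [h1, Monotone.measure_iUnion] at hA
    · exact lt_iSup_iff.1 hA
    · intro m m' hm
      refine image_mono (inter_subset_inter_right _ fun x hx => ?_)
      exact le_trans hx hm
  choose g hg using step
  let A : ℕ → {A : Set (ℕ → ℕ) // t < μ (f '' A)} := fun n => Nat.rec
    ⟨univ, by rwa [image_univ]⟩ (fun k B => ⟨B.1 ∩ {x | x k ≤ g B.1 k B.2}, hg B.1 k B.2⟩) n
  refine ⟨fun n => g (A n).1 n (A n).2, fun n => ?_⟩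
  have : ∀ n, (A n).1 = {x | ∀ i < n, x i ≤ g (A i).1 i (A i).2} := by
    intro n
    induction n with
    | zero => simp [A]
    | succ k ih =>
      have : (A (k+1)).1 = (A k).1 ∩ {x | x k ≤ g (A k).1 k (A k).2} := rfl
      rw [this]
      ext x
      have ihx := Set.ext_iff.1 ih x
      rw [mem_inter_iff, ihx]
      simp only [mem_ofPred_eq]
      constructor
      · rintro ⟨h1, h2⟩ i hi
        rcases Nat.lt_succ_iff_lt_or_eq.1 hi with h | h
        · exact h1 i h
        · subst h; convert h2
      · intro h
        refine ⟨fun i hi => h i (by omega), ?_⟩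
        convert h k (by omega)
  rw [← this n]
  exact (A n).2

lemma analytic_nullMeasurable {X : Type*} [TopologicalSpace X] [PolishSpace X]
    [MeasurableSpace X] [BorelSpace X] (μ : Measure X) [IsFiniteMeasure μ] {s : Set X}
    (hs : AnalyticSet s) : NullMeasurableSet s μ := by
  rw [AnalyticSet] at hs
  rcases hs with rfl | ⟨f, hf, rfl⟩
  · exact MeasurableSet.empty.nullMeasurableSet
  have key : ∀ t < μ (range f), ∃ L : Set X, L ⊆ range f ∧ MeasurableSet L ∧ t ≤ μ L := by
    intro t ht
    obtain ⟨b, hb⟩ := exists_approx_analytic μ f t ht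
    let K : Set (ℕ → ℕ) := Set.pi univ fun i => Set.Iic (b i)
    have hK : IsCompact K := isCompact_univ_pi fun i => (Set.finite_Iic (b i)).isCompact
    refine ⟨f '' K, image_subset_range _ _, (hK.image hf).measurableSet, ?_⟩
    rw [Set.measure_eq_iInf_isOpen]
    refine le_iInf₂ fun V hV => le_iInf fun hVo => ?_
    let := @PiNat.metricSpaceNatNat
    obtain ⟨δ, hδ, hKδ⟩ := hK.exists_thickening_subset_open (hVo.preimage hf) (image_subset_iff.1 hV)
    obtain ⟨n, hn⟩ := exists_pow_lt_of_lt_one hδ (by norm_num : (1/2 : ℝ) < 1)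
    refine (hb n).le.trans (measure_mono ?_)
    rintro _ ⟨x, hx, rfl⟩
    apply hKδ
    rw [Metric.mem_thickening_iff]
    refine ⟨fun i => min (x i) (b i), fun i _ => mem_Iic.2 (min_le_right _ _), ?_⟩
    refine lt_of_le_of_lt ?_ hn
    rw [← PiNat.mem_cylinder_iff_dist_le]
    intro i hi
    exact (min_eq_left (hx i hi)).symm
  obtain ⟨L, hLs, hLm, hL⟩ : ∃ L : Set X, L ⊆ range f ∧ MeasurableSet L ∧ μ (range f) ≤ μ L := by
    by_cases h0 : μ (range f) = 0
    · exact ⟨∅, empty_subset _, MeasurableSet.empty, by simp [h0]⟩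
    obtain ⟨u, -, hu, hut⟩ := exists_seq_strictMono_tendsto' (pos_iff_ne_zero.2 h0)
    choose L h1 h2 h3 using fun n => key (u n) (hu n).2
    refine ⟨⋃ n, L n, iUnion_subset h1, MeasurableSet.iUnion h2, ?_⟩
    exact le_of_tendsto' hut fun n => (h3 n).trans (measure_mono (subset_iUnion L n))
  refine hLm.nullMeasurableSet.congr ?_
  refine LE.le.eventuallyLE hLs |>.antisymm ?_
  refine (subset_toMeasurable μ (range f)).eventuallyLE.trans ?_
  rw [ae_le_set]
  rw [measure_sdiff (hLs.trans (subset_toMeasurable _ _)) hLm.nullMeasurableSet (measure_ne_top _ _),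
    measure_toMeasurable]
  exact tsub_eq_zero_of_le hL

end Analytic

section EInt

lemma epos_coe (a : ℝ) : epos (a : EReal) = ENNReal.ofReal a := by simp [epos]
lemma epos_top : epos ⊤ = ⊤ := by simp [epos]
lemma epos_bot : epos ⊥ = 0 := by simp [epos]

lemma epos_mono : Monotone epos := by
  intro a b hab
  induction a with
  | bot => simp [epos_bot]
  | top => simp [top_le_iff.1 hab]
  | coe a =>
    induction b with
    | bot => simp at hab
    | top => simp [epos_top]
    | coe b =>
      rw [epos_coe, epos_coe]
      exact ENNReal.ofReal_le_ofReal (by exact_mod_cast hab)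

lemma measurable_epos : Measurable epos := epos_mono.measurable

lemma eInt_mono_ae {Ω : Type*} [MeasurableSpace Ω] {P : Measure Ω} {f g : Ω → EReal}
    (h : ∀ᵐ ω ∂P, f ω ≤ g ω) : eInt f P ≤ eInt g P := by
  apply EReal.sub_le_sub
  · rw [EReal.coe_ennreal_le_coe_ennreal_iff]
    exact lintegral_mono_ae (h.mono fun ω hω => epos_mono hω)
  · rw [EReal.coe_ennreal_le_coe_ennreal_iff]
    exact lintegral_mono_ae (h.mono fun ω hω => epos_mono (EReal.neg_le_neg_iff.2 hω))

lemma eInt_real {Ω : Type*} [MeasurableSpace Ω] {P : Measure Ω} {f : Ω → EReal} {g : Ω → ℝ}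
    (hg : Integrable g P) (h : ∀ᵐ ω ∂P, f ω = (g ω : EReal)) :
    eInt f P = ((∫ ω, g ω ∂P : ℝ) : EReal) := by
  unfold eInt
  have h1 : ∫⁻ x, epos (f x) ∂P = ∫⁻ x, ENNReal.ofReal (g x) ∂P :=
    lintegral_congr_ae (h.mono fun ω hω => by simp only [hω, epos_coe])
  have h2 : ∫⁻ x, epos (-(f x)) ∂P = ∫⁻ x, ENNReal.ofReal (-g x) ∂P :=
    lintegral_congr_ae (h.mono fun ω hω => by
      simp only [hω]; rw [← EReal.coe_neg, epos_coe])
  rw [h1, h2, integral_eq_lintegral_pos_part_sub_lintegral_neg_part hg]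
  have f1 : ∫⁻ x, ENNReal.ofReal (g x) ∂P ≠ ⊤ := hg.lintegral_lt_top.ne
  have f2 : ∫⁻ x, ENNReal.ofReal (-g x) ∂P ≠ ⊤ := hg.neg.lintegral_lt_top.ne
  rw [EReal.coe_sub, EReal.coe_ennreal_toReal f1, EReal.coe_ennreal_toReal f2]

lemma eInt_add_le {Ω : Type*} [MeasurableSpace Ω] {P : Measure Ω} {f : Ω → EReal} {g : Ω → ℝ}
    (hf : AEMeasurable f P) (hg : Integrable g P) :
    ((∫ ω, g ω ∂P : ℝ) : EReal) + eInt f P ≤ eInt (fun ω => (g ω : EReal) + f ω) P := by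
  by_cases hneg : ∫⁻ x, epos (-(f x)) ∂P = ⊤
  · have : eInt f P = ⊥ := by
      unfold eInt
      rw [hneg]
      simp
    simp [this]
  have habs : ∫⁻ x, ENNReal.ofReal |g x| ∂P ≠ ⊤ := hg.abs.lintegral_lt_top.ne
  have habsm : AEMeasurable (fun x => ENNReal.ofReal |g x|) P :=
    hg.abs.aestronglyMeasurable.aemeasurable.ennreal_ofReal
  by_cases hpos : ∫⁻ x, epos (f x) ∂P = ⊤
  · have e1 : ∫⁻ x, epos ((g x : EReal) + f x) ∂P = ⊤ := by
      have h1 : ∫⁻ x, epos (f x) ∂P ≤ ∫⁻ x, (epos ((g x : EReal) + f x) + ENNReal.ofReal |g x|) ∂P := by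
        refine lintegral_mono fun x => ?_
        change epos (f x) ≤ epos ((g x : EReal) + f x) + ENNReal.ofReal |g x|
        induction f x with
        | bot => simp [epos_bot]
        | top => simp [epos_top]
        | coe a =>
          rw [← EReal.coe_add, epos_coe, epos_coe]
          refine (ENNReal.ofReal_le_ofReal ?_).trans ENNReal.ofReal_add_le
          have := neg_abs_le (g x); linarith
      rw [lintegral_add_right' _ habsm, hpos, top_le_iff, ENNReal.add_eq_top] at h1
      exact h1.resolve_right habs
    have e2 : ∫⁻ x, epos (-((g x : EReal) + f x)) ∂P ≠ ⊤ := by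
      have h1 : ∫⁻ x, epos (-((g x : EReal) + f x)) ∂P
          ≤ ∫⁻ x, (epos (-(f x)) + ENNReal.ofReal |g x|) ∂P := by
        refine lintegral_mono fun x => ?_
        change epos (-((g x : EReal) + f x)) ≤ epos (-(f x)) + ENNReal.ofReal |g x|
        induction f x with
        | bot => simp [epos_top]
        | top => simp [epos_bot]
        | coe a =>
          rw [← EReal.coe_add, ← EReal.coe_neg, ← EReal.coe_neg, epos_coe, epos_coe]
          refine (ENNReal.ofReal_le_ofReal ?_).trans ENNReal.ofReal_add_le
          have := neg_abs_le (g x); linarith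
      rw [lintegral_add_right' _ habsm] at h1
      exact ne_top_of_le_ne_top (ENNReal.add_ne_top.2 ⟨hneg, habs⟩) h1
    have : eInt (fun ω => (g ω : EReal) + f ω) P = ⊤ := by
      unfold eInt
      rw [e1]
      lift (∫⁻ x, epos (-((g x : EReal) + f x)) ∂P) to ℝ≥0 using e2 with b hb
      simp only [EReal.coe_ennreal_top]
      exact EReal.top_sub_coe b
    rw [this]
    exact le_top
  -- both finite
  have m1 : AEMeasurable (fun x => epos (f x)) P := measurable_epos.comp_aemeasurable hf
  have m2 : AEMeasurable (fun x => epos (-(f x))) P :=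
    measurable_epos.comp_aemeasurable hf.neg
  have hreal : ∀ᵐ x ∂P, f x = ((f x).toReal : EReal) := by
    filter_upwards [ae_lt_top' m1 hpos, ae_lt_top' m2 hneg] with x h1 h2
    have ht : f x ≠ ⊤ := by
      intro h; simp [h, epos_top] at h1
    have hb : f x ≠ ⊥ := by
      intro h; simp [h, epos_top] at h2
    exact (EReal.coe_toReal ht hb).symm
  have hIntg : Integrable (fun x => (f x).toReal) P := by
    have hm : AEMeasurable (fun x => (f x).toReal) P :=
      measurable_ereal_toReal.comp_aemeasurable hf
    refine ⟨hm.aestronglyMeasurable, ?_⟩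
    rw [hasFiniteIntegral_iff_norm]
    have : ∫⁻ x, ENNReal.ofReal ‖(f x).toReal‖ ∂P ≤ ∫⁻ x, (epos (f x) + epos (-(f x))) ∂P := by
      refine lintegral_mono_ae (hreal.mono fun x hx => ?_)
      rw [hx, ← EReal.coe_neg, epos_coe, epos_coe, EReal.toReal_coe, Real.norm_eq_abs]
      rcases abs_cases (f x).toReal with h | h
      · rw [h.1]; exact le_self_add
      · rw [h.1]; exact le_add_self
    refine this.trans_lt ?_
    rw [lintegral_add_left' m1]
    exact ENNReal.add_lt_top.2 ⟨lt_top_iff_ne_top.2 hpos, lt_top_iff_ne_top.2 hneg⟩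
  rw [eInt_real hIntg hreal, eInt_real (hg.add hIntg) (hreal.mono fun x hx => by
    simp only [Pi.add_apply]; rw [EReal.coe_add, ← hx]), integral_add' hg hIntg, EReal.coe_add]

end EInt


section Wass

set_option linter.unusedSectionVars false

variable {Y : Type*} [MeasurableSpace Y] [MetricSpace Y] [SecondCountableTopology Y] [BorelSpace Y]

lemma measurable_distr (r : ℝ) (y₀ : Y) :
    Measurable fun y : Y => ENNReal.ofReal (dist y y₀ ^ r) := by
  fun_prop

lemma dist_rpow_le {r : ℝ} (hr : 1 ≤ r) (a b c : Y) :
    ENNReal.ofReal (dist a b ^ r) ≤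
      2 ^ (r - 1) * (ENNReal.ofReal (dist a c ^ r) + ENNReal.ofReal (dist b c ^ r)) := by
  have h0 : 0 ≤ r := by linarith
  rw [← ENNReal.ofReal_rpow_of_nonneg dist_nonneg h0, ← ENNReal.ofReal_rpow_of_nonneg dist_nonneg h0,
    ← ENNReal.ofReal_rpow_of_nonneg dist_nonneg h0]
  refine le_trans (ENNReal.rpow_le_rpow ?_ h0) (ENNReal.rpow_add_le_mul_rpow_add_rpow _ _ hr)
  rw [← ENNReal.ofReal_add dist_nonneg dist_nonneg]
  exact ENNReal.ofReal_le_ofReal (by rw [dist_comm b c]; exact dist_triangle a c b)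

lemma exists_coupling_bound {r : ℝ} (hr : 1 ≤ r) (y₀ : Y) (p q : Measure Y)
    [IsProbabilityMeasure p] [IsProbabilityMeasure q] (γ : Measure (Y × Y)) [IsFiniteMeasure γ]
    (h1 : γ.map Prod.fst ≤ p) (h2 : γ.map Prod.snd ≤ q) (L : ℝ≥0∞) :
    ∃ π ∈ Couplings p q, ∫⁻ z, ENNReal.ofReal (dist z.1 z.2 ^ r) ∂π ≤
      ∫⁻ z, ENNReal.ofReal (dist z.1 z.2 ^ r) ∂γ + 2 ^ (r - 1) * (2 * (L * (1 - γ univ)) +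
        (∫⁻ y, (ENNReal.ofReal (dist y y₀ ^ r) - L) ∂p +
          ∫⁻ y, (ENNReal.ofReal (dist y y₀ ^ r) - L) ∂q)) := by
  set f : Y → ℝ≥0∞ := fun y => ENNReal.ofReal (dist y y₀ ^ r) with hf
  have hfm : Measurable f := measurable_distr r y₀
  set u := p - γ.map Prod.fst with hu
  set v := q - γ.map Prod.snd with hv
  set m := 1 - γ univ with hm
  have hup : u + γ.map Prod.fst = p := Measure.sub_add_cancel_of_le h1
  have hvq : v + γ.map Prod.snd = q := Measure.sub_add_cancel_of_le h2
  have hule : u ≤ p := by rw [← hup]; exact Measure.le_add_right le_rfl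
  have hvle : v ≤ q := by rw [← hvq]; exact Measure.le_add_right le_rfl
  have : IsFiniteMeasure u := isFiniteMeasure_of_le p hule
  have : IsFiniteMeasure v := isFiniteMeasure_of_le q hvle
  have hum : u univ = m := by
    have := congrArg (fun μ : Measure Y => μ univ) hup
    simp only [Measure.add_apply, measure_univ] at this
    rw [Measure.map_apply measurable_fst MeasurableSet.univ, preimage_univ] at this
    exact ENNReal.eq_sub_of_add_eq (measure_ne_top _ _) this
  have hvm : v univ = m := by
    have := congrArg (fun μ : Measure Y => μ univ) hvq
    simp only [Measure.add_apply, measure_univ] at this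
    rw [Measure.map_apply measurable_snd MeasurableSet.univ, preimage_univ] at this
    exact ENNReal.eq_sub_of_add_eq (measure_ne_top _ _) this
  have hmtop : m ≠ ⊤ := by rw [← hum]; exact measure_ne_top _ _
  have hu1 : m⁻¹ • (m • u) = u := by
    by_cases h0 : m = 0
    · have : u = 0 := by rw [← Measure.measure_univ_eq_zero, hum, h0]
      simp [this]
    · rw [smul_smul, ENNReal.inv_mul_cancel h0 hmtop, one_smul]
  have hv1 : m⁻¹ • (m • v) = v := by
    by_cases h0 : m = 0
    · have : v = 0 := by rw [← Measure.measure_univ_eq_zero, hvm, h0]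
      simp [this]
    · rw [smul_smul, ENNReal.inv_mul_cancel h0 hmtop, one_smul]
  refine ⟨γ + m⁻¹ • u.prod v, ⟨?_, ?_⟩, ?_⟩
  · rw [Measure.map_add _ _ measurable_fst, Measure.map_smul, Measure.map_fst_prod, hvm, hu1, add_comm,
      hup]
  · rw [Measure.map_add _ _ measurable_snd, Measure.map_smul, Measure.map_snd_prod, hum, hv1, add_comm,
      hvq]
  · rw [lintegral_add_measure, lintegral_smul_measure]
    refine add_le_add le_rfl ?_
    have b1 : ∀ (w p : Measure Y), w ≤ p → w univ = m →
        ∫⁻ y, f y ∂w ≤ L * m + ∫⁻ y, (f y - L) ∂p := by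
      intro w p hwp hwm
      calc ∫⁻ y, f y ∂w ≤ ∫⁻ y, (L + (f y - L)) ∂w := lintegral_mono fun y => le_add_tsub
        _ = L * m + ∫⁻ y, (f y - L) ∂w := by
          rw [lintegral_add_left measurable_const, lintegral_const, hwm]
        _ ≤ _ := by gcongr
    have b2 : ∫⁻ z, ENNReal.ofReal (dist z.1 z.2 ^ r) ∂(u.prod v) ≤
        m * (2 ^ (r-1) * (∫⁻ y, f y ∂u + ∫⁻ y, f y ∂v)) := by
      calc ∫⁻ z, ENNReal.ofReal (dist z.1 z.2 ^ r) ∂(u.prod v)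
          ≤ ∫⁻ z, 2 ^ (r-1) * (f z.1 + f z.2) ∂(u.prod v) :=
            lintegral_mono fun z => dist_rpow_le hr z.1 z.2 y₀
        _ = 2 ^ (r-1) * (∫⁻ y, f y ∂((u.prod v).map Prod.fst) + ∫⁻ y, f y ∂((u.prod v).map Prod.snd)) := by
            rw [lintegral_const_mul _ (by fun_prop), lintegral_add_left (by fun_prop),
              lintegral_map hfm measurable_fst, lintegral_map hfm measurable_snd]
        _ = _ := by
            rw [Measure.map_fst_prod, Measure.map_snd_prod, hum, hvm, lintegral_smul_measure,
              lintegral_smul_measure, smul_eq_mul, smul_eq_mul]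
            ring
    calc m⁻¹ • ∫⁻ z, ENNReal.ofReal (dist z.1 z.2 ^ r) ∂(u.prod v)
        ≤ m⁻¹ * (m * (2 ^ (r-1) * (∫⁻ y, f y ∂u + ∫⁻ y, f y ∂v))) := by
          rw [smul_eq_mul]; gcongr
      _ ≤ 2 ^ (r-1) * (∫⁻ y, f y ∂u + ∫⁻ y, f y ∂v) := by
          rw [← mul_assoc]
          refine (mul_le_mul_left (ENNReal.inv_mul_le_one m) _).trans ?_
          rw [one_mul]
      _ ≤ 2 ^ (r-1) * ((L * m + ∫⁻ y, (f y - L) ∂p) + (L * m + ∫⁻ y, (f y - L) ∂q)) := by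
          gcongr
          · exact b1 u p hule hum
          · exact b1 v q hvle hvm
      _ = _ := by ring

lemma exists_gamma {δ : ℝ} {r : ℝ} (hr : 1 ≤ r) (p q : Measure Y)
    [IsProbabilityMeasure p] [IsProbabilityMeasure q] (G : ℕ → Set Y)
    (hG : ∀ k, MeasurableSet (G k)) (hd : Pairwise (Function.onFun Disjoint G))
    (hδ : ∀ k, ∀ a ∈ G k, ∀ b ∈ G k, dist a b ≤ δ) (N : ℕ) :
    ∃ γ : Measure (Y × Y), IsFiniteMeasure γ ∧ γ.map Prod.fst ≤ p ∧ γ.map Prod.snd ≤ q ∧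
      γ univ = ∑ k ∈ Finset.range N, min (p (G k)) (q (G k)) ∧
      ∫⁻ z, ENNReal.ofReal (dist z.1 z.2 ^ r) ∂γ ≤ ENNReal.ofReal (δ ^ r) := by
  let c : ℕ → ℝ≥0∞ := fun k => min (p (G k)) (q (G k))
  let T : ℕ → Measure (Y × Y) := fun k =>
    (c k * ((p (G k))⁻¹ * (q (G k))⁻¹)) • (p.restrict (G k)).prod (q.restrict (G k))
  let γ : Measure (Y × Y) := ∑ k ∈ Finset.range N, T k
  have hsum : ∀ (p : Measure Y) [IsProbabilityMeasure p],
      ∑ k ∈ Finset.range N, p.restrict (G k) ≤ p := by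
    intro p _
    have := Measure.restrict_biUnion_finset (μ := p) (s := G) (T := Finset.range N)
      (fun i _ j _ hij => hd hij) hG
    rw [Measure.sum_fintype] at this
    rw [← Finset.sum_coe_sort, ← this]
    exact Measure.restrict_le_self
  have hT1 : ∀ k, (T k).map Prod.fst ≤ p.restrict (G k) := by
    intro k
    simp only [T]
    rw [Measure.map_smul, Measure.map_fst_prod, Measure.restrict_apply_univ, smul_smul]
    refine Measure.le_iff.2 fun s _ => ?_
    rw [Measure.smul_apply, smul_eq_mul]
    refine mul_le_of_le_one_left' ?_
    calc c k * ((p (G k))⁻¹ * (q (G k))⁻¹) * q (G k)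
        = (c k * (p (G k))⁻¹) * ((q (G k))⁻¹ * q (G k)) := by ring
      _ ≤ (p (G k) * (p (G k))⁻¹) * 1 := by
        gcongr
        · exact min_le_left _ _
        · exact ENNReal.inv_mul_le_one _
      _ ≤ 1 := by rw [mul_one]; exact ENNReal.mul_inv_le_one _
  have hT2 : ∀ k, (T k).map Prod.snd ≤ q.restrict (G k) := by
    intro k
    simp only [T]
    rw [Measure.map_smul, Measure.map_snd_prod, Measure.restrict_apply_univ, smul_smul]
    refine Measure.le_iff.2 fun s _ => ?_
    rw [Measure.smul_apply, smul_eq_mul]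
    refine mul_le_of_le_one_left' ?_
    calc c k * ((p (G k))⁻¹ * (q (G k))⁻¹) * p (G k)
        = (c k * (q (G k))⁻¹) * ((p (G k))⁻¹ * p (G k)) := by ring
      _ ≤ (q (G k) * (q (G k))⁻¹) * 1 := by
        gcongr
        · exact min_le_right _ _
        · exact ENNReal.inv_mul_le_one _
      _ ≤ 1 := by rw [mul_one]; exact ENNReal.mul_inv_le_one _
  have hf1 : γ.map Prod.fst ≤ p := by
    simp only [γ]
    rw [Measure.map_finset_sum measurable_fst.aemeasurable]
    exact (Finset.sum_le_sum fun k _ => hT1 k).trans (hsum p)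
  have hf2 : γ.map Prod.snd ≤ q := by
    simp only [γ]
    rw [Measure.map_finset_sum measurable_snd.aemeasurable]
    exact (Finset.sum_le_sum fun k _ => hT2 k).trans (hsum q)
  have hle1 : γ univ ≤ 1 := by
    have := hf1 univ
    rwa [Measure.map_apply measurable_fst MeasurableSet.univ, preimage_univ,
      measure_univ (μ := p)] at this
  refine ⟨γ, ⟨hle1.trans_lt ENNReal.one_lt_top⟩, hf1, hf2, ?_, ?_⟩
  · simp only [γ, Measure.coe_finsetSum, Finset.sum_apply]
    refine Finset.sum_congr rfl fun k _ => ?_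
    simp only [T]
    rw [Measure.smul_apply, smul_eq_mul, ← univ_prod_univ, Measure.prod_prod,
      Measure.restrict_apply_univ, Measure.restrict_apply_univ]
    by_cases h1 : p (G k) = 0
    · simp [h1]
    by_cases h2 : q (G k) = 0
    · simp [h2]
    calc _ = c k * ((p (G k))⁻¹ * p (G k)) * ((q (G k))⁻¹ * q (G k)) := by ring
      _ = c k := by
        rw [ENNReal.inv_mul_cancel h1 (measure_ne_top _ _),
          ENNReal.inv_mul_cancel h2 (measure_ne_top _ _), mul_one, mul_one]
  · have hae : ∀ᵐ z ∂γ, ENNReal.ofReal (dist z.1 z.2 ^ r) ≤ ENNReal.ofReal (δ ^ r) := by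
      simp only [γ]
      rw [ae_finsetSum_measure_iff]
      intro k _
      refine Measure.ae_smul_measure ?_ _
      rw [Measure.prod_restrict]
      refine (ae_restrict_mem ((hG k).prod (hG k))).mono fun z hz => ?_
      exact ENNReal.ofReal_le_ofReal (Real.rpow_le_rpow dist_nonneg (hδ k _ hz.1 _ hz.2)
        (by linarith))
    calc _ ≤ ∫⁻ _, ENNReal.ofReal (δ ^ r) ∂γ := lintegral_mono_ae hae
      _ = ENNReal.ofReal (δ ^ r) * γ univ := lintegral_const _
      _ ≤ ENNReal.ofReal (δ ^ r) * 1 := by gcongr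
      _ = _ := mul_one _

lemma exists_partition (p : Measure Y) [IsProbabilityMeasure p] [Nonempty Y] {δ : ℝ} (hδ : 0 < δ) :
    ∃ G : ℕ → Set Y, (∀ k, IsOpen (G k)) ∧ Pairwise (Function.onFun Disjoint G) ∧
      (∀ k, ∀ a ∈ G k, ∀ b ∈ G k, dist a b ≤ δ) ∧
      Tendsto (fun N => ∑ k ∈ Finset.range N, p (G k)) atTop (𝓝 1) := by
  have hρ : ∀ k : ℕ, ∃ ρ ∈ Ioo (δ / 4) (δ / 2),
      p (frontier (Metric.ball (TopologicalSpace.denseSeq Y k) ρ)) = 0 := by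
    intro k
    obtain ⟨ρ, h1, h2⟩ := exists_null_frontier_thickening p {TopologicalSpace.denseSeq Y k}
      (show δ / 4 < δ / 2 by linarith)
    exact ⟨ρ, h1, by rwa [Metric.thickening_singleton] at h2⟩
  choose ρ hρ1 hρ2 using hρ
  let B : ℕ → Set Y := fun k => Metric.ball (TopologicalSpace.denseSeq Y k) (ρ k)
  let G : ℕ → Set Y := fun k => B k \ ⋃ l ∈ Finset.range k, closure (B l)
  have hGo : ∀ k, IsOpen (G k) := fun k => Metric.isOpen_ball.sdiff
    (Set.Finite.isClosed_biUnion (Finset.finite_toSet _) fun l _ => isClosed_closure)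
  have hlt : ∀ i j, i < j → Disjoint (G i) (G j) := by
    intro i j hij
    rw [Set.disjoint_left]
    intro y hi hj
    refine hj.2 ?_
    simp only [mem_iUnion, Finset.mem_range]
    exact ⟨i, hij, subset_closure hi.1⟩
  have hdis : Pairwise (Function.onFun Disjoint G) := by
    intro i j hij
    rcases lt_or_gt_of_ne hij with h | h
    · exact hlt i j h
    · exact (hlt j i h).symm
  refine ⟨G, hGo, hdis, ?_, ?_⟩
  · intro k a ha b hb
    have h1 : dist a _ < ρ k := ha.1
    have h2 : dist b _ < ρ k := hb.1
    have h3 := (hρ1 k).2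
    have := dist_triangle_right a b (TopologicalSpace.denseSeq Y k)
    linarith
  · have hone : p (⋃ k, G k) = 1 := by
      rw [prob_compl_eq_zero_iff (MeasurableSet.iUnion fun k => (hGo k).measurableSet) |>.symm]
      refine measure_mono_null ?_ (measure_iUnion_null hρ2)
      intro y hy
      have hex : ∃ k, y ∈ B k := by
        obtain ⟨k, hk⟩ := (TopologicalSpace.denseRange_denseSeq Y).exists_dist_lt y
          (show 0 < δ / 4 by linarith)
        exact ⟨k, hk.trans (hρ1 k).1⟩
      classical
      have hk := Nat.find_spec hex
      by_contra hcon
      refine hy (mem_iUnion.2 ⟨Nat.find hex, hk, ?_⟩)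
      intro hcl
      simp only [mem_iUnion, Finset.mem_range] at hcl
      obtain ⟨l, hl, hyl⟩ := hcl
      refine hcon (mem_iUnion.2 ⟨l, hyl, ?_⟩)
      rw [Metric.isOpen_ball.interior_eq]
      exact Nat.find_min hex hl
    rw [measure_iUnion hdis fun k => (hGo k).measurableSet] at hone
    rw [← hone]
    exact ENNReal.summable.hasSum.tendsto_sum_nat

lemma wrTendsto_of_tendsto {r : ℝ} (hr : 1 ≤ r) (y₀ : Y) (ps : ℕ → ProbabilityMeasure Y)
    (p : ProbabilityMeasure Y) (hw : Tendsto ps atTop (𝓝 p))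
    (hfin : ∫⁻ y, ENNReal.ofReal (dist y y₀ ^ r) ∂(p : Measure Y) ≠ ⊤)
    (hfins : ∀ n, ∫⁻ y, ENNReal.ofReal (dist y y₀ ^ r) ∂(ps n : Measure Y) ≠ ⊤)
    (hm : Tendsto (fun n => ∫⁻ y, ENNReal.ofReal (dist y y₀ ^ r) ∂(ps n : Measure Y)) atTop
      (𝓝 (∫⁻ y, ENNReal.ofReal (dist y y₀ ^ r) ∂(p : Measure Y)))) :
    WrTendsto r (fun n => (ps n : Measure Y)) (p : Measure Y) := by
  have : Nonempty Y := ⟨y₀⟩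
  have hr0 : 0 < r := by linarith
  set f : Y → ℝ≥0∞ := fun y => ENNReal.ofReal (dist y y₀ ^ r) with hf
  have hfm : Measurable f := measurable_distr r y₀
  have h2top : (2 : ℝ≥0∞) ^ (r - 1) ≠ ⊤ := ENNReal.rpow_ne_top_of_nonneg (by linarith) (by simp)
  unfold WrTendsto
  rw [ENNReal.tendsto_nhds_zero]
  intro ε hε
  wlog hεt : ε ≠ ⊤ generalizing ε with H
  · exact Eventually.of_forall fun n => by rw [not_not.1 hεt]; exact le_top
  set η := ε ^ r with hη
  have hηpos : 0 < η := ENNReal.rpow_pos hε hεt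
  have hη3 : 0 < η / 3 := ENNReal.div_pos hηpos.ne' (by simp)
  -- tails
  have htail : Tendsto (fun L : ℕ => 2 ^ (r - 1) * (∫⁻ y, (f y - (L : ℝ≥0∞)) ∂(p : Measure Y) +
      ∫⁻ y, (f y - (L : ℝ≥0∞)) ∂(p : Measure Y))) atTop (𝓝 0) := by
    have h1 : Tendsto (fun L : ℕ => ∫⁻ y, (f y - (L : ℝ≥0∞)) ∂(p : Measure Y)) atTop
        (𝓝 (∫⁻ y, 0 ∂(p : Measure Y))) := by
      refine tendsto_lintegral_of_dominated_convergence f (fun n => by fun_prop)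
        (fun n => Eventually.of_forall fun y => tsub_le_self) hfin (Eventually.of_forall fun y => ?_)
      obtain ⟨N, hN⟩ := ENNReal.exists_nat_gt (show f y ≠ ⊤ from ENNReal.ofReal_ne_top)
      refine tendsto_const_nhds.congr' ?_
      filter_upwards [eventually_ge_atTop N] with n hn
      exact (tsub_eq_zero_of_le (hN.le.trans (by exact_mod_cast hn))).symm
    rw [lintegral_zero] at h1
    simpa using ENNReal.Tendsto.const_mul (h1.add h1) (Or.inr h2top)
  obtain ⟨L, hL⟩ := (htail.eventually (gt_mem_nhds hη3)).exists
  obtain ⟨δ, hδ, hδη⟩ : ∃ δ : ℝ, 0 < δ ∧ ENNReal.ofReal (δ ^ r) < η / 3 := by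
    have h1 : Tendsto (fun δ : ℝ => ENNReal.ofReal (δ ^ r)) (𝓝[>] 0) (𝓝 0) := by
      have : ContinuousAt (fun δ : ℝ => ENNReal.ofReal (δ ^ r)) 0 :=
        ENNReal.continuous_ofReal.continuousAt.comp
          (Real.continuousAt_rpow_const 0 r (Or.inr hr0.le))
      have := this.tendsto
      simp only [Real.zero_rpow hr0.ne', ENNReal.ofReal_zero] at this
      exact this.mono_left nhdsWithin_le_nhds
    obtain ⟨δ, h2, h3⟩ := ((h1.eventually (gt_mem_nhds hη3)).and self_mem_nhdsWithin).exists
    exact ⟨δ, h3, h2⟩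
  obtain ⟨G, hGo, hGd, hGδ, hGs⟩ := exists_partition (p : Measure Y) hδ
  have hN0 : Tendsto (fun N => 2 ^ (r - 1) * (2 * ((L : ℝ≥0∞) *
      (1 - ∑ k ∈ Finset.range N, (p : Measure Y) (G k))))) atTop (𝓝 0) := by
    have h1 : Tendsto (fun N => 1 - ∑ k ∈ Finset.range N, (p : Measure Y) (G k)) atTop (𝓝 (1 - 1)) :=
      ENNReal.Tendsto.sub tendsto_const_nhds hGs (Or.inl (by simp))
    rw [tsub_self] at h1
    have h2 := ENNReal.Tendsto.const_mul (a := 2 ^ (r-1)) (ENNReal.Tendsto.const_mul (a := 2)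
      (ENNReal.Tendsto.const_mul (a := (L : ℝ≥0∞)) h1 (Or.inr (by simp))) (Or.inr (by simp)))
      (Or.inr h2top)
    simpa using h2
  obtain ⟨N, hN⟩ := (hN0.eventually (gt_mem_nhds hη3)).exists
  -- convergence in n
  have c1 : Tendsto (fun n => ∑ k ∈ Finset.range N, min ((ps n : Measure Y) (G k))
      ((p : Measure Y) (G k))) atTop (𝓝 (∑ k ∈ Finset.range N, (p : Measure Y) (G k))) := by
    refine tendsto_finsetSum _ fun k _ => ?_
    have hli := ProbabilityMeasure.le_liminf_measure_open_of_tendsto hw (hGo k)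
    refine tendsto_of_le_liminf_of_limsup_le ?_ ?_
    · rw [liminf_min]
      · simpa using hli
    · refine (limsup_le_limsup (Eventually.of_forall fun n => min_le_right _ _)).trans ?_
      simp
  have c2 : Tendsto (fun n => ∫⁻ y, (f y - (L : ℝ≥0∞)) ∂(ps n : Measure Y)) atTop
      (𝓝 (∫⁻ y, (f y - (L : ℝ≥0∞)) ∂(p : Measure Y))) := by
    let b : BoundedContinuousFunction Y ℝ≥0 := BoundedContinuousFunction.mkOfBound
      ⟨fun y => min (Real.toNNReal (dist y y₀ ^ r)) (L : ℝ≥0), by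
        refine Continuous.min (continuous_real_toNNReal.comp ?_) continuous_const
        exact (continuous_id.dist continuous_const).rpow_const fun _ => Or.inr hr0.le⟩ L
      (fun y z => by
        change dist (min _ _ : ℝ≥0) (min _ _ : ℝ≥0) ≤ _
        rw [NNReal.dist_eq, abs_sub_le_iff]
        have h1 : ((min (Real.toNNReal (dist y y₀ ^ r)) (L : ℝ≥0) : ℝ≥0) : ℝ) ≤ L := by
          exact_mod_cast min_le_right (Real.toNNReal (dist y y₀ ^ r)) (L : ℝ≥0)
        have h2 : ((min (Real.toNNReal (dist z y₀ ^ r)) (L : ℝ≥0) : ℝ≥0) : ℝ) ≤ L := by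
          exact_mod_cast min_le_right (Real.toNNReal (dist z y₀ ^ r)) (L : ℝ≥0)
        have h3 := (min (Real.toNNReal (dist y y₀ ^ r)) (L : ℝ≥0)).coe_nonneg
        have h4 := (min (Real.toNNReal (dist z y₀ ^ r)) (L : ℝ≥0)).coe_nonneg
        constructor <;> linarith)
    have hb := (ProbabilityMeasure.tendsto_iff_forall_lintegral_tendsto.1 hw) b
    have hbe : ∀ y, (b y : ℝ≥0∞) = min (f y) L := fun y => by
      change ((min (Real.toNNReal (dist y y₀ ^ r)) (L : ℝ≥0) : ℝ≥0) : ℝ≥0∞) = _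
      rw [ENNReal.coe_min]; rfl
    have hsub : ∀ q : Measure Y, ∫⁻ y, f y ∂q ≠ ⊤ →
        ∫⁻ y, (f y - (L : ℝ≥0∞)) ∂q = ∫⁻ y, f y ∂q - ∫⁻ y, (b y : ℝ≥0∞) ∂q := by
      intro q hq
      simp_rw [hbe]
      have hle : ∫⁻ y, min (f y) L ∂q ≤ ∫⁻ y, f y ∂q := lintegral_mono fun y => min_le_left _ _
      rw [← lintegral_sub (by fun_prop) (ne_top_of_le_ne_top hq hle)
        (Eventually.of_forall fun y => min_le_left _ _)]
      refine lintegral_congr fun y => ?_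
      rcases le_total (f y) (L : ℝ≥0∞) with h | h
      · rw [min_eq_left h, tsub_self, tsub_eq_zero_of_le h]
      · rw [min_eq_right h]
    rw [hsub _ hfin]
    simp_rw [fun n => hsub _ (hfins n)]
    exact ENNReal.Tendsto.sub hm hb (Or.inl hfin)
  have c3 : Tendsto (fun n => ENNReal.ofReal (δ ^ r) + 2 ^ (r - 1) * (2 * ((L : ℝ≥0∞) *
      (1 - ∑ k ∈ Finset.range N, min ((ps n : Measure Y) (G k)) ((p : Measure Y) (G k)))) +
      (∫⁻ y, (f y - (L : ℝ≥0∞)) ∂(ps n : Measure Y) + ∫⁻ y, (f y - (L : ℝ≥0∞)) ∂(p : Measure Y)))) atTop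
      (𝓝 (ENNReal.ofReal (δ ^ r) + 2 ^ (r - 1) * (2 * ((L : ℝ≥0∞) *
      (1 - ∑ k ∈ Finset.range N, (p : Measure Y) (G k))) +
      (∫⁻ y, (f y - (L : ℝ≥0∞)) ∂(p : Measure Y) + ∫⁻ y, (f y - (L : ℝ≥0∞)) ∂(p : Measure Y))))) := by
    refine tendsto_const_nhds.add (ENNReal.Tendsto.const_mul (Tendsto.add (ENNReal.Tendsto.const_mul
      (ENNReal.Tendsto.const_mul ?_ (Or.inr (by simp))) (Or.inr (by simp)))
      (c2.add tendsto_const_nhds)) (Or.inr h2top))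
    exact ENNReal.Tendsto.sub tendsto_const_nhds c1 (Or.inl (by simp))
  have hlim : ENNReal.ofReal (δ ^ r) + 2 ^ (r - 1) * (2 * ((L : ℝ≥0∞) *
      (1 - ∑ k ∈ Finset.range N, (p : Measure Y) (G k))) +
      (∫⁻ y, (f y - (L : ℝ≥0∞)) ∂(p : Measure Y) + ∫⁻ y, (f y - (L : ℝ≥0∞)) ∂(p : Measure Y))) < η := by
    rw [mul_add, ← ENNReal.add_thirds η, ← add_assoc]
    exact ENNReal.add_lt_add (ENNReal.add_lt_add hδη hN) hL
  filter_upwards [c3.eventually (gt_mem_nhds hlim)] with n hn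
  obtain ⟨γ, hγ, g1, g2, g3, g4⟩ := exists_gamma (δ := δ) hr (ps n : Measure Y) (p : Measure Y) G
    (fun k => (hGo k).measurableSet) hGd hGδ N
  obtain ⟨π, hπ, hπb⟩ := exists_coupling_bound hr y₀ (ps n : Measure Y) (p : Measure Y) γ g1 g2
    (L : ℝ≥0∞)
  have hπη : ∫⁻ z, ENNReal.ofReal (dist z.1 z.2 ^ r) ∂π ≤ η := by
    refine hπb.trans (le_trans ?_ hn.le)
    rw [g3]
    gcongr
  calc Wr r (ps n : Measure Y) (p : Measure Y)
      ≤ (∫⁻ z, ENNReal.ofReal (dist z.1 z.2 ^ r) ∂π) ^ (1 / r) := iInf₂_le π hπ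
    _ ≤ η ^ (1 / r) := ENNReal.rpow_le_rpow hπη (by positivity)
    _ = ε := by rw [hη, ← ENNReal.rpow_mul, mul_one_div_cancel hr0.ne', ENNReal.rpow_one]

lemma Wr_dirac_le {r : ℝ} (hr : 1 ≤ r) (y₀ : Y) (p : Measure Y) [IsProbabilityMeasure p] :
    Wr r p (Measure.dirac y₀) ^ r ≤ ∫⁻ y, ENNReal.ofReal (dist y y₀ ^ r) ∂p := by
  have hr0 : 0 < r := by linarith
  have hc : p.prod (Measure.dirac y₀) ∈ Couplings p (Measure.dirac y₀) := by
    constructor <;> simp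
  have : Wr r p (Measure.dirac y₀) ≤
      (∫⁻ z : Y × Y, ENNReal.ofReal (dist z.1 z.2 ^ r) ∂(p.prod (Measure.dirac y₀))) ^ (1 / r) :=
    iInf₂_le _ hc
  refine (ENNReal.rpow_le_rpow this hr0.le).trans ?_
  rw [← ENNReal.rpow_mul, one_div_mul_cancel hr0.ne', ENNReal.rpow_one,
    lintegral_prod _ (by fun_prop)]
  refine lintegral_mono fun y => ?_
  rw [lintegral_dirac' _ (by fun_prop)]

end Wass


section Abstract

lemma exists_ultrafilter_weak {E F : Type*} [AddCommGroup E] [Module ℝ E] [AddCommGroup F]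
    [Module ℝ F] (B : E →ₗ[ℝ] F →ₗ[ℝ] ℝ) (G : Set E) (hG : Convex ℝ G) (w₀ : E)
    (hsep : ∀ (f : F) (u : ℝ), (∀ l ∈ G, B l f ≤ u) → B w₀ f ≤ u) :
    ∃ U : Ultrafilter E, G ∈ U ∧ ∀ y, Tendsto (fun l => B l y) U (𝓝 (B w₀ y)) := by
  let S' : Set (WeakBilin B) := G
  have hS' : Convex ℝ S' := hG
  let w : WeakBilin B := w₀
  have hcl : w ∈ closure S' := by
    by_contra hcon
    have hconv : Convex ℝ (closure S') := Convex.closure hS'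
    obtain ⟨f, u, hf1, hf2⟩ := geometric_hahn_banach_closed_point hconv isClosed_closure hcon
    obtain ⟨y, rfl⟩ := LinearMap.dualEmbedding_surjective B f
    have h1 : u < B w₀ y := hf2
    have h2 : ∀ l ∈ G, B l y ≤ u := fun l hl => (hf1 l (subset_closure hl)).le
    exact absurd (hsep y u h2) (not_le.2 h1)
  obtain ⟨U, hU1, hU2⟩ := mem_closure_iff_ultrafilter.1 hcl
  exact ⟨U, hU1, fun y => ((WeakBilin.eval_continuous B y).tendsto w).mono_left hU2⟩

lemma exists_measure_of_separation {Z : Type*} [TopologicalSpace Z] [CompactSpace Z]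
    [TopologicalSpace.MetrizableSpace Z] [MeasurableSpace Z] [BorelSpace Z]
    {F : Type*} [AddCommGroup F] [Module ℝ F]
    (I : Set (C(Z, ℝ) × F)) (J : Set ((Z → ℝ≥0∞) × F))
    (hJ : ∀ hv ∈ J, LowerSemicontinuous hv.1)
    (S : Set (F →ₗ[ℝ] ℝ))
    (hS : ∀ l ∈ S, ∃ z : Z, (∀ Tw ∈ I, Tw.1 z = l Tw.2) ∧
      ∀ hv ∈ J, hv.1 z ≤ ENNReal.ofReal (l hv.2) ∧ 0 ≤ l hv.2)
    (z₀ : F →ₗ[ℝ] ℝ)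
    (hsep : ∀ f : F, ∀ u : ℝ, (∀ l ∈ S, l f ≤ u) → z₀ f ≤ u) :
    ∃ Q : ProbabilityMeasure Z, (∀ Tw ∈ I, ∫ z, Tw.1 z ∂(Q : Measure Z) = z₀ Tw.2) ∧
      ∀ hv ∈ J, ∫⁻ z, hv.1 z ∂(Q : Measure Z) ≤ ENNReal.ofReal (z₀ hv.2) := by
  let G : Set (F →ₗ[ℝ] ℝ) := {l | ∃ Q : ProbabilityMeasure Z,
    (∀ Tw ∈ I, ∫ z, Tw.1 z ∂(Q : Measure Z) = l Tw.2) ∧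
      ∀ hv ∈ J, ∫⁻ z, hv.1 z ∂(Q : Measure Z) ≤ ENNReal.ofReal (l hv.2) ∧ 0 ≤ l hv.2}
  have hIntg : ∀ (T : C(Z, ℝ)) (Q : Measure Z) [IsFiniteMeasure Q], Integrable T Q := by
    intro T Q _
    exact (BoundedContinuousFunction.mkOfCompact T).integrable Q
  have hGc : Convex ℝ G := by
    intro l₁ h₁ l₂ h₂ a b ha hb hab
    obtain ⟨Q₁, t₁, e₁⟩ := h₁
    obtain ⟨Q₂, t₂, e₂⟩ := h₂
    let Q : Measure Z := ENNReal.ofReal a • (Q₁ : Measure Z) + ENNReal.ofReal b • (Q₂ : Measure Z)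
    have hQ : IsProbabilityMeasure Q := ⟨by
      simp only [Q, Measure.add_apply, Measure.smul_apply, measure_univ, smul_eq_mul, mul_one]
      rw [← ENNReal.ofReal_add ha hb, hab, ENNReal.ofReal_one]⟩
    refine ⟨⟨Q, hQ⟩, fun Tw hTw => ?_, fun hv hhv => ⟨?_, ?_⟩⟩
    · change ∫ z, Tw.1 z ∂(ENNReal.ofReal a • (Q₁ : Measure Z) + ENNReal.ofReal b • (Q₂ : Measure Z)) = _
      rw [integral_add_measure ((hIntg _ _).smul_measure ENNReal.ofReal_ne_top)
        ((hIntg _ _).smul_measure ENNReal.ofReal_ne_top), integral_smul_measure,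
        integral_smul_measure, t₁ _ hTw, t₂ _ hTw, ENNReal.toReal_ofReal ha, ENNReal.toReal_ofReal hb]
      rfl
    · change ∫⁻ z, hv.1 z ∂(ENNReal.ofReal a • (Q₁ : Measure Z) + ENNReal.ofReal b • (Q₂ : Measure Z)) ≤ _
      rw [lintegral_add_measure, lintegral_smul_measure, lintegral_smul_measure, smul_eq_mul, smul_eq_mul]
      have : (a • l₁ + b • l₂) hv.2 = a * l₁ hv.2 + b * l₂ hv.2 := rfl
      rw [this, ENNReal.ofReal_add (mul_nonneg ha (e₁ hv hhv).2) (mul_nonneg hb (e₂ hv hhv).2),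
        ENNReal.ofReal_mul ha, ENNReal.ofReal_mul hb]
      gcongr
      · exact (e₁ hv hhv).1
      · exact (e₂ hv hhv).1
    · exact add_nonneg (mul_nonneg ha (e₁ hv hhv).2) (mul_nonneg hb (e₂ hv hhv).2)
  have hSG : S ⊆ G := by
    intro l hl
    obtain ⟨z, h1, h2⟩ := hS l hl
    refine ⟨⟨Measure.dirac z, inferInstance⟩, fun Tw hTw => ?_, fun hv hhv => ⟨?_, (h2 hv hhv).2⟩⟩
    · change ∫ z, Tw.1 z ∂(Measure.dirac z) = _
      rw [integral_dirac' _ _ Tw.1.continuous.stronglyMeasurable, h1 Tw hTw]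
    · change ∫⁻ z, hv.1 z ∂(Measure.dirac z) ≤ _
      rw [lintegral_dirac' _ (hJ hv hhv).measurable]
      exact (h2 hv hhv).1
  obtain ⟨U, hU1, hev⟩ := exists_ultrafilter_weak LinearMap.id G hGc z₀
    (fun y u h => hsep y u fun l hl => h l (hSG hl))
  have hne : Nonempty (ProbabilityMeasure Z) := by
    obtain ⟨l, hl⟩ := U.nonempty_of_mem hU1
    obtain ⟨Q, -⟩ := (hl : l ∈ G)
    exact ⟨Q⟩
  classical
  let q : (F →ₗ[ℝ] ℝ) → ProbabilityMeasure Z := fun l => if h : l ∈ G then Classical.choose h else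
    Classical.choice hne
  have hq : ∀ l (h : l ∈ G), (∀ Tw ∈ I, ∫ z, Tw.1 z ∂(q l : Measure Z) = l Tw.2) ∧
      ∀ hv ∈ J, ∫⁻ z, hv.1 z ∂(q l : Measure Z) ≤ ENNReal.ofReal (l hv.2) ∧ 0 ≤ l hv.2 := by
    intro l h
    have : q l = Classical.choose h := dif_pos h
    rw [this]
    exact Classical.choose_spec h
  let Q : ProbabilityMeasure Z := (U.map q).lim
  have hQ : Tendsto q U (𝓝 Q) := (U.map q).le_nhds_lim
  refine ⟨Q, fun Tw hTw => ?_, fun hv hhv => ?_⟩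
  · have h1 := ((continuous_integral_pm Tw.1).tendsto Q).comp hQ
    refine tendsto_nhds_unique h1 ((hev Tw.2).congr' ?_)
    filter_upwards [hU1] with l hl
    exact ((hq l hl).1 Tw hTw).symm
  · refine le_of_forall_gt_imp_ge_of_dense fun b hb => ?_
    have h1 : ∀ᶠ l in (U : Filter (F →ₗ[ℝ] ℝ)), ENNReal.ofReal (l hv.2) < b :=
      ((ENNReal.continuous_ofReal.tendsto _).comp (hev hv.2)).eventually (gt_mem_nhds hb)
    refine (isClosed_lintegral_le (hJ hv hhv) b).mem_of_tendsto hQ ?_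
    filter_upwards [hU1, h1] with l hl hl2
    exact ((hq l hl).2 hv hhv).1.trans hl2.le

end Abstract


section LambdaLemmas

variable {X Y : Type*} [MeasurableSpace X] [MeasurableSpace Y]

lemma aemeasurable_dirac_prod (P : Measure (X × Measure Y))
    (hP : ∀ᵐ xp ∂P, IsProbabilityMeasure xp.2) :
    AEMeasurable (fun xp : X × Measure Y => (Measure.dirac xp.1).prod xp.2) P := by
  classical
  have hset : MeasurableSet {xp : X × Measure Y | xp.2 univ = 1} :=
    ((Measure.measurable_coe MeasurableSet.univ).comp measurable_snd) (measurableSet_singleton 1)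
  let q : ProbabilityTheory.Kernel (X × Measure Y) Y :=
    ⟨fun xp => if xp.2 univ = 1 then xp.2 else 0,
      Measurable.ite hset measurable_snd measurable_const⟩
  have hqf : ProbabilityTheory.IsFiniteKernel q := ⟨1, ENNReal.one_lt_top, fun xp => by
    change (if xp.2 univ = 1 then xp.2 else 0 : Measure Y) univ ≤ 1
    split_ifs with h
    · exact h.le
    · simp⟩
  let d : ProbabilityTheory.Kernel (X × Measure Y) X :=
    ProbabilityTheory.Kernel.deterministic Prod.fst measurable_fst
  refine ⟨fun xp => (ProbabilityTheory.Kernel.prod d q) xp, (ProbabilityTheory.Kernel.prod d q).measurable, ?_⟩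
  filter_upwards [hP] with xp hxp
  rw [ProbabilityTheory.Kernel.prod_apply, ProbabilityTheory.Kernel.deterministic_apply]
  have : q xp = xp.2 := if_pos hxp.measure_univ
  rw [this]

lemma intensityHat_map_fst (P : Measure (X × Measure Y))
    (hP : ∀ᵐ xp ∂P, IsProbabilityMeasure xp.2) :
    (intensityHat P).map Prod.fst = P.map Prod.fst := by
  ext s hs
  rw [Measure.map_apply measurable_fst hs, Measure.map_apply measurable_fst hs, intensityHat,
    Measure.bind_apply (measurable_fst hs) (aemeasurable_dirac_prod P hP),
    ← lintegral_indicator_one (measurable_fst hs)]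
  refine lintegral_congr_ae ?_
  filter_upwards [hP] with xp hxp
  have : (Prod.fst ⁻¹' s : Set (X × Y)) = s ×ˢ univ := by ext; simp
  rw [this, Measure.prod_prod, measure_univ, mul_one, Measure.dirac_apply' _ hs]
  rfl

lemma intensityHat_map_snd (P : Measure (X × Measure Y))
    (hP : ∀ᵐ xp ∂P, IsProbabilityMeasure xp.2) :
    (intensityHat P).map Prod.snd = (P.map Prod.snd).join := by
  ext s hs
  rw [Measure.map_apply measurable_snd hs, intensityHat,
    Measure.bind_apply (measurable_snd hs) (aemeasurable_dirac_prod P hP),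
    Measure.join_apply hs, lintegral_map (Measure.measurable_coe hs) measurable_snd]
  refine lintegral_congr_ae ?_
  filter_upwards [hP] with xp hxp
  have : (Prod.snd ⁻¹' s : Set (X × Y)) = univ ×ˢ s := by ext; simp
  rw [this, Measure.prod_prod, measure_univ, one_mul]

lemma mem_Lambda_iff (μ : Measure X) (ν : Measure Y) (P : Measure (X × Measure Y)) :
    P ∈ Lambda μ ν ↔ IsProbabilityMeasure P ∧ (∀ᵐ xp ∂P, IsProbabilityMeasure xp.2) ∧
      P.map Prod.fst = μ ∧ (P.map Prod.snd).join = ν := by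
  constructor
  · rintro ⟨h1, h2, h3, h4⟩
    exact ⟨h1, h2, by rw [← intensityHat_map_fst P h2, h3], by rw [← intensityHat_map_snd P h2, h4]⟩
  · rintro ⟨h1, h2, h3, h4⟩
    exact ⟨h1, h2, by rw [intensityHat_map_fst P h2, h3], by rw [intensityHat_map_snd P h2, h4]⟩

lemma Lambda_lintegral_snd {μ : Measure X} {ν : Measure Y} {P : Measure (X × Measure Y)}
    (hP : P ∈ Lambda μ ν) {f : Y → ℝ≥0∞} (hf : Measurable f) :
    ∫⁻ xp, ∫⁻ y, f y ∂xp.2 ∂P = ∫⁻ y, f y ∂ν := by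
  obtain ⟨_, _, _, h⟩ := (mem_Lambda_iff μ ν P).1 hP
  rw [← h, Measure.lintegral_join hf.aemeasurable,
    lintegral_map (Measure.measurable_lintegral hf) measurable_snd]

lemma Lambda_ae_Pr [PseudoMetricSpace Y] [OpensMeasurableSpace Y] {μ : Measure X} {ν : Measure Y}
    {P : Measure (X × Measure Y)} (hP : P ∈ Lambda μ ν) {r : ℝ} {y₀ : Y} (hν : FinMom r y₀ ν) :
    ∀ᵐ xp ∂P, xp.2 ∈ Pr r y₀ := by
  obtain ⟨_, h2, _, _⟩ := (mem_Lambda_iff μ ν P).1 hP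
  have hf : Measurable fun y : Y => ENNReal.ofReal (dist y y₀ ^ r) :=
    (((continuous_id.dist continuous_const).measurable).pow_const r).ennreal_ofReal
  have := ae_lt_top (μ := P) (f := fun xp => ∫⁻ y, ENNReal.ofReal (dist y y₀ ^ r) ∂xp.2)
    ((Measure.measurable_lintegral hf).comp measurable_snd)
    (by rw [Lambda_lintegral_snd hP hf]; exact hν.ne)
  filter_upwards [h2, this] with xp ha hb
  exact ⟨ha, hb⟩

end LambdaLemmas

section Compactification

set_option linter.unusedSectionVars false

/-- The Hilbert cube. -/
abbrev HCube := ℕ → unitInterval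

instance borelSpacePMHCube : BorelSpace (ProbabilityMeasure HCube) := borelSpace_pm HCube

/-- The compactified space. -/
abbrev ZZ := HCube × ProbabilityMeasure HCube × ℝ≥0∞

open Classical in
/-- push-forward of probability measures to the Hilbert cube -/
def pushY {Y : Type*} [MeasurableSpace Y] (e : Y → HCube) (p : Measure Y) :
    ProbabilityMeasure HCube :=
  ⟨if p.map e univ = 1 then p.map e else Measure.dirac 0, by
    split_ifs with h
    · exact ⟨h⟩
    · infer_instance⟩

/-- the map into the compactification -/
def jmap {X Y : Type*} [MeasurableSpace Y] [PseudoMetricSpace Y] (eX : X → HCube) (eY : Y → HCube)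
    (r : ℝ) (y₀ : Y) (xp : X × Measure Y) : ZZ :=
  (eX xp.1, pushY eY xp.2, ∫⁻ y, ENNReal.ofReal (dist y y₀ ^ r) ∂xp.2)

variable {X Y : Type*} [MeasurableSpace X] [MetricSpace X] [CompleteSpace X]
    [SecondCountableTopology X] [BorelSpace X]
    [MeasurableSpace Y] [MetricSpace Y] [CompleteSpace Y] [SecondCountableTopology Y]
    [BorelSpace Y]

lemma pushY_coe {Y : Type*} [MeasurableSpace Y] {e : Y → HCube} (he : Measurable e) (p : Measure Y)
    [IsProbabilityMeasure p] : (pushY e p : Measure HCube) = p.map e := by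
  have h : IsProbabilityMeasure (p.map e) := Measure.isProbabilityMeasure_map he.aemeasurable
  exact if_pos h.measure_univ

lemma measurable_pushY {Y : Type*} [MeasurableSpace Y] {e : Y → HCube} (he : Measurable e) :
    Measurable (pushY e) := by
  classical
  refine Measurable.subtype_mk ?_
  have hm : Measurable fun p : Measure Y => p.map e := Measure.measurable_map e he
  exact Measurable.ite (((Measure.measurable_coe MeasurableSet.univ).comp hm)
    (measurableSet_singleton 1)) hm measurable_const

lemma measurable_jmap {eX : X → HCube} {eY : Y → HCube} (hX : Measurable eX) (hY : Measurable eY)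
    (r : ℝ) (y₀ : Y) : Measurable (jmap eX eY r y₀) := by
  refine (hX.comp measurable_fst).prodMk (((measurable_pushY hY).comp measurable_snd).prodMk ?_)
  exact (Measure.measurable_lintegral (measurable_distr r y₀)).comp measurable_snd

end Compactification


section Recover

set_option linter.unusedSectionVars false

variable {X Y : Type*} [MeasurableSpace X] [MetricSpace X] [CompleteSpace X]
    [SecondCountableTopology X] [BorelSpace X]
    [MeasurableSpace Y] [MetricSpace Y] [CompleteSpace Y] [SecondCountableTopology Y]
    [BorelSpace Y]

lemma exists_gbar {e : Y → HCube} (he : Topology.IsEmbedding e) {r : ℝ} (hr : 0 ≤ r) (y₀ : Y) :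
    ∃ g : HCube → ℝ≥0∞, LowerSemicontinuous g ∧
      ∀ y, g (e y) = ENNReal.ofReal (dist y y₀ ^ r) := by
  refine exists_lsc_ext e (fun y => ENNReal.ofReal (dist y y₀ ^ r)) fun y ys hys t _ hle => ?_
  have h1 : Tendsto ys atTop (𝓝 y) := he.tendsto_nhds_iff.2 hys
  have hc : Continuous fun y : Y => ENNReal.ofReal (dist y y₀ ^ r) :=
    ENNReal.continuous_ofReal.comp
      ((continuous_id.dist continuous_const).rpow_const fun _ => Or.inr hr)
  exact le_of_tendsto' ((hc.tendsto y).comp h1) hle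

lemma join_eq_of_integral (Q : Measure ZZ) [IsProbabilityMeasure Q] (N : Measure HCube)
    [IsProbabilityMeasure N]
    (h2 : ∀ g : C(HCube, ℝ), ∫ z, (∫ k, g k ∂(z.2.1 : Measure HCube)) ∂Q = ∫ k, g k ∂N) :
    (Q.map fun z => (z.2.1 : Measure HCube)).join = N := by
  have hmeas : Measurable fun z : ZZ => (z.2.1 : Measure HCube) :=
    measurable_subtype_coe.comp (measurable_fst.comp measurable_snd)
  symm
  refine ext_of_forall_lintegral_eq_of_IsFiniteMeasure fun f => ?_
  have hfm : Measurable fun k => (f k : ℝ≥0∞) := f.continuous.measurable.coe_nnreal_ennreal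
  rw [Measure.lintegral_join hfm.aemeasurable, lintegral_map (Measure.measurable_lintegral hfm) hmeas]
  let g : C(HCube, ℝ) := ⟨fun k => (f k : ℝ), by fun_prop⟩
  have hg : ∀ q : Measure HCube, IsFiniteMeasure q → ∫⁻ k, (f k : ℝ≥0∞) ∂q =
      ENNReal.ofReal (∫ k, g k ∂q) := by
    intro q _
    rw [ofReal_integral_eq_lintegral_ofReal]
    · refine lintegral_congr fun k => ?_
      simp [g]
    · exact (BoundedContinuousFunction.mkOfCompact g).integrable q
    · exact Eventually.of_forall fun k => (f k).coe_nonneg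
  have hgc : Continuous fun z : ZZ => ∫ k, g k ∂(z.2.1 : Measure HCube) :=
    (continuous_integral_pm g).comp (continuous_fst.comp continuous_snd)
  rw [hg N inferInstance, ← h2 g, ofReal_integral_eq_lintegral_ofReal]
  · exact lintegral_congr fun z => (hg _ inferInstance).symm
  · exact (BoundedContinuousFunction.mkOfCompact ⟨_, hgc⟩).integrable Q
  · exact Eventually.of_forall fun z => integral_nonneg fun k => (f k).coe_nonneg

lemma exists_Lambda_of_Q {eX : X → HCube} {eY : Y → HCube} (heX : Topology.IsEmbedding eX)
    (heY : Topology.IsEmbedding eY) {r : ℝ} (x₀ : X) (y₀ : Y) (Q : Measure ZZ) [IsProbabilityMeasure Q]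
    (μ : Measure X) (ν : Measure Y) [IsProbabilityMeasure μ] [IsProbabilityMeasure ν]
    (hν : FinMom r y₀ ν) (g : HCube → ℝ≥0∞) (hg : LowerSemicontinuous g)
    (hge : ∀ y, g (eY y) = ENNReal.ofReal (dist y y₀ ^ r))
    (h1 : ∀ f : C(HCube, ℝ), ∫ z, f z.1 ∂Q = ∫ x, f (eX x) ∂μ)
    (h2 : ∀ f : C(HCube, ℝ), ∫ z, (∫ k, f k ∂(z.2.1 : Measure HCube)) ∂Q = ∫ y, f (eY y) ∂ν)
    (h3 : ∀ᵐ z ∂Q, ∫⁻ k, g k ∂(z.2.1 : Measure HCube) ≤ z.2.2)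
    (h4 : ∫⁻ z, z.2.2 ∂Q ≤ ∫⁻ y, ENNReal.ofReal (dist y y₀ ^ r) ∂ν) :
    ∃ P ∈ Lambda μ ν, ∀ c : ZZ → ℝ≥0∞, Measurable c →
      ∫⁻ xp, c (jmap eX eY r y₀ xp) ∂P = ∫⁻ z, c z ∂Q := by
  have mX : MeasurableEmbedding eX := heX.continuous.measurableEmbedding heX.injective
  have mY : MeasurableEmbedding eY := heY.continuous.measurableEmbedding heY.injective
  have hmeas : Measurable fun z : ZZ => (z.2.1 : Measure HCube) :=
    measurable_subtype_coe.comp (measurable_fst.comp measurable_snd)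
  have : IsProbabilityMeasure (μ.map eX) := Measure.isProbabilityMeasure_map mX.measurable.aemeasurable
  have : IsProbabilityMeasure (ν.map eY) := Measure.isProbabilityMeasure_map mY.measurable.aemeasurable
  have : IsProbabilityMeasure (Q.map Prod.fst) :=
    Measure.isProbabilityMeasure_map measurable_fst.aemeasurable
  have hfst : Q.map Prod.fst = μ.map eX := by
    refine ext_of_forall_integral_eq_of_IsFiniteMeasure fun f => ?_
    rw [integral_map measurable_fst.aemeasurable f.continuous.aestronglyMeasurable,
      integral_map mX.measurable.aemeasurable f.continuous.aestronglyMeasurable]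
    exact h1 f.toContinuousMap
  have hsnd : (Q.map fun z => (z.2.1 : Measure HCube)).join = ν.map eY := by
    refine join_eq_of_integral Q _ fun f => ?_
    rw [h2 f, integral_map mY.measurable.aemeasurable f.continuous.aestronglyMeasurable]
  have hjl : ∀ f : HCube → ℝ≥0∞, Measurable f →
      ∫⁻ z, ∫⁻ k, f k ∂(z.2.1 : Measure HCube) ∂Q = ∫⁻ y, f (eY y) ∂ν := by
    intro f hf
    rw [← lintegral_map hf mY.measurable, ← hsnd, Measure.lintegral_join hf.aemeasurable,
      lintegral_map (Measure.measurable_lintegral hf) hmeas]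
  have hm2 : ∀ᵐ z ∂Q, ∫⁻ k, g k ∂(z.2.1 : Measure HCube) = z.2.2 := by
    refine ae_eq_of_ae_le_of_lintegral_le h3 ?_ (measurable_snd.comp measurable_snd).aemeasurable ?_
    · rw [hjl g hg.measurable]
      simp_rw [hge]
      exact hν.ne
    · rw [hjl g hg.measurable]
      simp_rw [hge]
      exact h4
  have hr1 : ∀ᵐ z ∂Q, z.1 ∈ range eX := by
    have h : ∀ᵐ k ∂(Q.map Prod.fst), k ∈ range eX := by
      rw [hfst]
      exact (ae_map_iff mX.measurable.aemeasurable (p := fun k => k ∈ range eX)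
        mX.measurableSet_range).2 (Eventually.of_forall fun x => mem_range_self x)
    exact ae_of_ae_map measurable_fst.aemeasurable h
  have hr2 : ∀ᵐ z ∂Q, (z.2.1 : Measure HCube) (range eY)ᶜ = 0 := by
    have h : ∫⁻ z, (z.2.1 : Measure HCube) (range eY)ᶜ ∂Q = 0 := by
      have := hjl ((range eY)ᶜ.indicator 1) (measurable_one.indicator mY.measurableSet_range.compl)
      simp_rw [lintegral_indicator_one mY.measurableSet_range.compl] at this
      rw [this]
      simp
    have hmm : Measurable fun z : ZZ => (z.2.1 : Measure HCube) (range eY)ᶜ :=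
      (Measure.measurable_coe mY.measurableSet_range.compl).comp hmeas
    exact (lintegral_eq_zero_iff hmm).1 h
  obtain ⟨iX, hiX, hiXe⟩ := mX.exists_measurable_extend (g := (id : X → X)) measurable_id (fun _ => ⟨x₀⟩)
  let h : ZZ → X × Measure Y := fun z => (iX z.1, (z.2.1 : Measure HCube).comap eY)
  have hcomap : Measurable fun q : Measure HCube => q.comap eY := by
    refine Measure.measurable_of_measurable_coe _ fun s hs => ?_
    simp_rw [mY.comap_apply]
    exact Measure.measurable_coe (mY.measurableSet_image.2 hs)
  have hh : Measurable h := (hiX.comp measurable_fst).prodMk (hcomap.comp hmeas)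
  have hprob : ∀ᵐ z ∂Q, IsProbabilityMeasure (h z).2 := by
    filter_upwards [hr2] with z hz
    refine ⟨?_⟩
    change (z.2.1 : Measure HCube).comap eY univ = 1
    rw [mY.comap_apply, image_univ]
    exact (prob_compl_eq_zero_iff mY.measurableSet_range).1 hz
  have hmapc : ∀ᵐ z ∂Q, (h z).2.map eY = (z.2.1 : Measure HCube) := by
    filter_upwards [hr2] with z hz
    change ((z.2.1 : Measure HCube).comap eY).map eY = _
    rw [mY.map_comap]
    exact Measure.restrict_eq_self_of_ae_mem (by rwa [ae_iff])
  have hj : ∀ᵐ z ∂Q, jmap eX eY r y₀ (h z) = z := by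
    filter_upwards [hr1, hprob, hmapc, hm2] with z z1 z2 z3 z4
    refine Prod.ext ?_ (Prod.ext ?_ ?_)
    · obtain ⟨x, hx⟩ := z1
      change eX (iX z.1) = z.1
      rw [← hx]
      exact congrArg eX (congrFun hiXe x)
    · apply Subtype.ext
      change (pushY eY (h z).2 : Measure HCube) = _
      rw [pushY_coe mY.measurable, z3]
      rfl
    · change ∫⁻ y, ENNReal.ofReal (dist y y₀ ^ r) ∂(h z).2 = z.2.2
      rw [← z4, ← z3, lintegral_map hg.measurable mY.measurable]
      simp_rw [hge]
  refine ⟨Q.map h, (mem_Lambda_iff _ _ _).2 ⟨Measure.isProbabilityMeasure_map hh.aemeasurable, ?_, ?_, ?_⟩, ?_⟩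
  · have hs : MeasurableSet {xp : X × Measure Y | IsProbabilityMeasure xp.2} := by
      have : {xp : X × Measure Y | IsProbabilityMeasure xp.2} =
          (fun xp : X × Measure Y => xp.2 univ) ⁻¹' {1} := by
        ext xp
        exact isProbabilityMeasure_iff
      rw [this]
      exact ((Measure.measurable_coe MeasurableSet.univ).comp measurable_snd)
        (measurableSet_singleton 1)
    rw [ae_map_iff hh.aemeasurable hs]
    exact hprob
  · rw [Measure.map_map measurable_fst hh]
    have : Prod.fst ∘ h = iX ∘ Prod.fst := rfl
    rw [this, ← Measure.map_map hiX measurable_fst, hfst, Measure.map_map hiX mX.measurable, hiXe,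
      Measure.map_id]
  · rw [Measure.map_map measurable_snd hh]
    ext s hs
    rw [Measure.join_apply hs, lintegral_map (Measure.measurable_coe hs) (measurable_snd.comp hh)]
    change ∫⁻ z, (z.2.1 : Measure HCube).comap eY s ∂Q = _
    simp_rw [mY.comap_apply]
    have hs' := mY.measurableSet_image.2 hs
    have := hjl ((eY '' s).indicator 1) (measurable_one.indicator hs')
    simp_rw [lintegral_indicator_one hs'] at this
    rw [this, ← lintegral_indicator_one hs]
    refine lintegral_congr fun y => ?_
    by_cases hy : y ∈ s
    · rw [indicator_of_mem hy, indicator_of_mem (mem_image_of_mem _ hy)]; rfl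
    · rw [indicator_of_notMem hy, indicator_of_notMem]
      rwa [heY.injective.mem_set_image]
  · intro c hc
    have hcm : Measurable fun xp => c (jmap eX eY r y₀ xp) :=
      hc.comp (measurable_jmap mX.measurable mY.measurable r y₀)
    rw [lintegral_map hcm hh]
    refine lintegral_congr_ae ?_
    filter_upwards [hj] with z hz
    simp only [hz]

end Recover


section PhiRLemmas

set_option linter.unusedSectionVars false

variable {X : Type*} [MetricSpace X] {r : ℝ} {x₀ : X}

lemma PhiR_const (c : ℝ) : (fun _ : X => c) ∈ PhiR r x₀ := by
  refine ⟨continuous_const, |c|, fun x => ?_⟩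
  have : 0 ≤ dist x x₀ ^ r := Real.rpow_nonneg dist_nonneg _
  nlinarith [abs_nonneg c]

lemma PhiR_dist (hr : 0 ≤ r) : (fun x : X => dist x x₀ ^ r) ∈ PhiR r x₀ := by
  refine ⟨(continuous_id.dist continuous_const).rpow_const fun _ => Or.inr hr, 1, fun x => ?_⟩
  have : 0 ≤ dist x x₀ ^ r := Real.rpow_nonneg dist_nonneg _
  rw [abs_of_nonneg this]
  linarith

lemma PhiR_add {φ ψ : X → ℝ} (h1 : φ ∈ PhiR r x₀) (h2 : ψ ∈ PhiR r x₀) :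
    (fun x => φ x + ψ x) ∈ PhiR r x₀ := by
  obtain ⟨c1, K1, b1⟩ := h1
  obtain ⟨c2, K2, b2⟩ := h2
  refine ⟨c1.add c2, K1 + K2, fun x => ?_⟩
  have := abs_add_le (φ x) (ψ x)
  have := b1 x
  have := b2 x
  linarith

lemma PhiR_smul {φ : X → ℝ} (c : ℝ) (h1 : φ ∈ PhiR r x₀) :
    (fun x => c * φ x) ∈ PhiR r x₀ := by
  obtain ⟨c1, K1, b1⟩ := h1
  refine ⟨continuous_const.mul c1, |c| * K1, fun x => ?_⟩
  rw [abs_mul, mul_assoc]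
  exact mul_le_mul_of_nonneg_left (b1 x) (abs_nonneg c)

lemma PhiR_comp {e : X → HCube} (he : Continuous e) (f : C(HCube, ℝ)) :
    (fun x => f (e x)) ∈ PhiR r x₀ := by
  refine ⟨f.continuous.comp he, ‖f‖, fun x => ?_⟩
  have h1 : |f (e x)| ≤ ‖f‖ := f.norm_coe_le_norm (e x)
  have : 0 ≤ dist x x₀ ^ r := Real.rpow_nonneg dist_nonneg _
  nlinarith [norm_nonneg f]

variable [MeasurableSpace X] [BorelSpace X] [SecondCountableTopology X]

lemma integrable_distr {μ : Measure X} (hr : 0 ≤ r) (hμ : FinMom r x₀ μ) :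
    Integrable (fun x => dist x x₀ ^ r) μ := by
  refine ⟨((PhiR_dist (x₀ := x₀) hr).1).aestronglyMeasurable, ?_⟩
  rw [hasFiniteIntegral_iff_ofReal]
  · exact hμ
  · exact Eventually.of_forall fun x => Real.rpow_nonneg dist_nonneg _

lemma integral_distr {μ : Measure X} (hr : 0 ≤ r) :
    ∫ x, dist x x₀ ^ r ∂μ = (∫⁻ x, ENNReal.ofReal (dist x x₀ ^ r) ∂μ).toReal := by
  rw [integral_eq_lintegral_of_nonneg_ae]
  · exact Eventually.of_forall fun x => Real.rpow_nonneg dist_nonneg _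
  · exact ((PhiR_dist (x₀ := x₀) hr).1).aestronglyMeasurable

lemma PhiR_integrable {μ : Measure X} [IsFiniteMeasure μ] (hr : 0 ≤ r) (hμ : FinMom r x₀ μ)
    {φ : X → ℝ} (hφ : φ ∈ PhiR r x₀) : Integrable φ μ := by
  obtain ⟨hc, K, hK⟩ := hφ
  refine Integrable.mono' (((integrable_const (1 : ℝ)).add (integrable_distr hr hμ)).const_mul K)
    hc.aestronglyMeasurable (Eventually.of_forall fun x => ?_)
  exact hK x

end PhiRLemmas

section Core

abbrev FF := C(HCube, ℝ) × C(HCube, ℝ) × ℝ × ℝ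

lemma integrable_cmap (α : ProbabilityMeasure HCube) (f : C(HCube, ℝ)) :
    Integrable (fun k => f k) (α : Measure HCube) :=
  (BoundedContinuousFunction.mkOfCompact f).integrable _

def lfun (α β : ProbabilityMeasure HCube) (m s : ℝ) : FF →ₗ[ℝ] ℝ where
  toFun w := ∫ k, w.1 k ∂(α : Measure HCube) + ∫ k, w.2.1 k ∂(β : Measure HCube)
    + w.2.2.1 * m + w.2.2.2 * s
  map_add' v w := by
    have h1 : ∫ k, (v + w).1 k ∂(α : Measure HCube) = _ :=
      integral_add (integrable_cmap α v.1) (integrable_cmap α w.1)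
    have h2 : ∫ k, (v + w).2.1 k ∂(β : Measure HCube) = _ :=
      integral_add (integrable_cmap β v.2.1) (integrable_cmap β w.2.1)
    rw [h1, h2]
    simp only [Prod.snd_add, Prod.fst_add]
    ring
  map_smul' c w := by
    have h1 : ∫ k, (c • w).1 k ∂(α : Measure HCube) = _ :=
      integral_const_mul c (fun k => w.1 k)
    have h2 : ∫ k, (c • w).2.1 k ∂(β : Measure HCube) = _ :=
      integral_const_mul c (fun k => w.2.1 k)
    rw [h1, h2]
    simp only [Prod.smul_snd, Prod.smul_fst, smul_eq_mul, RingHom.id_apply]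
    ring

lemma lfun_apply (α β : ProbabilityMeasure HCube) (m s : ℝ) (w : FF) :
    lfun α β m s w = ∫ k, w.1 k ∂(α : Measure HCube) + ∫ k, w.2.1 k ∂(β : Measure HCube)
    + w.2.2.1 * m + w.2.2.2 * s := rfl

variable {X Y : Type*} [MeasurableSpace X] [MetricSpace X] [CompleteSpace X]
    [SecondCountableTopology X] [BorelSpace X]
    [MeasurableSpace Y] [MetricSpace Y] [CompleteSpace Y] [SecondCountableTopology Y]
    [BorelSpace Y]

lemma core_exists {eX : X → HCube} {eY : Y → HCube} (heX : Topology.IsEmbedding eX)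
    (heY : Topology.IsEmbedding eY) {r : ℝ} (hr : 1 ≤ r) (x₀ : X) (y₀ : Y)
    (μ : Measure X) (ν : Measure Y) [IsProbabilityMeasure μ] [IsProbabilityMeasure ν]
    (hμ : FinMom r x₀ μ) (hν : FinMom r y₀ ν) (cb : ZZ → ℝ≥0∞) (hcb : LowerSemicontinuous cb)
    (a : ℝ)
    (hdual : ∀ φ ∈ PhiR r x₀, ∀ ψ ∈ PhiR r y₀,
      (∀ x, ∀ p ∈ Pr r y₀, ENNReal.ofReal (φ x + ∫ y, ψ y ∂p) ≤ cb (jmap eX eY r y₀ (x, p))) →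
      ∫ x, φ x ∂μ + ∫ y, ψ y ∂ν ≤ a) :
    ∃ P ∈ Lambda μ ν, ∫⁻ xp, cb (jmap eX eY r y₀ xp) ∂P ≤ ENNReal.ofReal a := by
  have hr0 : 0 ≤ r := by linarith
  obtain ⟨g, hg, hge⟩ := exists_gbar heY hr0 y₀
  have mX : Measurable eX := heX.continuous.measurable
  have mY : Measurable eY := heY.continuous.measurable
  let M : Measure Y → ℝ := fun p => (∫⁻ y, ENNReal.ofReal (dist y y₀ ^ r) ∂p).toReal
  let D : X → ProbabilityMeasure HCube := fun x => ⟨Measure.dirac (eX x), inferInstance⟩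
  let S : Set (FF →ₗ[ℝ] ℝ) := {l | ∃ x, ∃ p ∈ Pr r y₀, ∃ s : ℝ, 0 ≤ s ∧
    cb (jmap eX eY r y₀ (x, p)) ≤ ENNReal.ofReal s ∧ l = lfun (D x) (pushY eY p) (M p) s}
  let I1 : C(HCube, ℝ) → C(ZZ, ℝ) × FF := fun f =>
    (⟨fun z => f z.1, by fun_prop⟩, (f, 0, 0, 0))
  let I2 : C(HCube, ℝ) → C(ZZ, ℝ) × FF := fun f =>
    (⟨fun z => ∫ k, f k ∂(z.2.1 : Measure HCube),
      (continuous_integral_pm f).comp (continuous_fst.comp continuous_snd)⟩, (0, f, 0, 0))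
  let B : Set ZZ := {z | ∫⁻ k, g k ∂(z.2.1 : Measure HCube) ≤ z.2.2}
  have hB : IsClosed B := by
    have h1 := (lsc_lintegral hg).isClosed_epigraph
    exact h1.preimage (continuous_snd (X := HCube) (Y := ProbabilityMeasure HCube × ℝ≥0∞))
  let J : Set ((ZZ → ℝ≥0∞) × FF) := {((fun z => z.2.2), (0, 0, 1, 0)),
    (Bᶜ.indicator (fun _ => 1), 0), (cb, (0, 0, 0, 1))}
  have hpush : ∀ p ∈ Pr r y₀, ∀ f : C(HCube, ℝ),
      ∫ k, f k ∂(pushY eY p : Measure HCube) = ∫ y, f (eY y) ∂p := by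
    intro p hp f
    have := hp.1
    rw [pushY_coe mY, integral_map mY.aemeasurable f.continuous.aestronglyMeasurable]
  have hmapX : ∀ f : C(HCube, ℝ), ∫ k, f k ∂(pushY eX μ : Measure HCube) = ∫ x, f (eX x) ∂μ := by
    intro f
    rw [pushY_coe mX, integral_map mX.aemeasurable f.continuous.aestronglyMeasurable]
  have hD : ∀ x, ∀ f : C(HCube, ℝ), ∫ k, f k ∂(D x : Measure HCube) = f (eX x) := by
    intro x f
    exact integral_dirac _ _
  have hνP : ν ∈ Pr r y₀ := ⟨inferInstance, hν⟩
  have key := exists_measure_of_separation (Z := ZZ) (F := FF) (range I1 ∪ range I2) J ?_ S ?_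
    (lfun (pushY eX μ) (pushY eY ν) (M ν) a) ?_
  · obtain ⟨Q, hI, hJ⟩ := key
    have h1 : ∀ f : C(HCube, ℝ), ∫ z, f z.1 ∂(Q : Measure ZZ) = ∫ x, f (eX x) ∂μ := by
      intro f
      have := hI (I1 f) (Or.inl ⟨f, rfl⟩)
      rw [lfun_apply] at this
      simpa [I1, hmapX] using this
    have h2 : ∀ f : C(HCube, ℝ), ∫ z, (∫ k, f k ∂(z.2.1 : Measure HCube)) ∂(Q : Measure ZZ) =
        ∫ y, f (eY y) ∂ν := by
      intro f
      have := hI (I2 f) (Or.inr ⟨f, rfl⟩)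
      rw [lfun_apply] at this
      simpa [I2, hpush ν hνP] using this
    have h4 : ∫⁻ z : ZZ, z.2.2 ∂(Q : Measure ZZ) ≤ ∫⁻ y, ENNReal.ofReal (dist y y₀ ^ r) ∂ν := by
      have := hJ _ (Or.inl rfl)
      rw [lfun_apply] at this
      simpa [M, ENNReal.ofReal_toReal hν.ne] using this
    have h3 : ∀ᵐ z ∂(Q : Measure ZZ), ∫⁻ k, g k ∂(z.2.1 : Measure HCube) ≤ z.2.2 := by
      have := hJ _ (Or.inr (Or.inl rfl))
      rw [map_zero, ENNReal.ofReal_zero, lintegral_indicator hB.measurableSet.compl] at this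
      simp only [lintegral_const, one_mul, Measure.restrict_apply_univ, nonpos_iff_eq_zero] at this
      exact this
    have h5 : ∫⁻ z : ZZ, cb z ∂(Q : Measure ZZ) ≤ ENNReal.ofReal a := by
      have := hJ _ (Or.inr (Or.inr rfl))
      rw [lfun_apply] at this
      simpa using this
    obtain ⟨P, hP, hPc⟩ := exists_Lambda_of_Q heX heY x₀ y₀ (Q : Measure ZZ) μ ν hν g hg hge
      h1 h2 h3 h4
    exact ⟨P, hP, (hPc cb hcb.measurable).trans_le h5⟩
  · rintro hv (rfl | rfl | rfl)
    · exact (continuous_snd.comp continuous_snd).lowerSemicontinuous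
    · exact hB.isOpen_compl.lowerSemicontinuous_indicator zero_le_one
    · exact hcb
  · rintro l ⟨x, p, hp, s, hs, hle, rfl⟩
    refine ⟨jmap eX eY r y₀ (x, p), ?_, ?_⟩
    · rintro Tw (⟨f, rfl⟩ | ⟨f, rfl⟩)
      · rw [lfun_apply]
        simp [I1, hD, jmap]
      · rw [lfun_apply]
        simp [I2, jmap]
    · have := hp.1
      rintro hv (rfl | rfl | rfl)
      · rw [lfun_apply]
        simp [M, ENNReal.ofReal_toReal hp.2.ne, jmap]
      · rw [map_zero]
        refine ⟨?_, le_rfl⟩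
        change Bᶜ.indicator (fun _ => (1 : ℝ≥0∞)) _ ≤ _
        rw [indicator_of_notMem]
        · exact bot_le
        · rw [notMem_compl_iff]
          change ∫⁻ k, g k ∂(pushY eY p : Measure HCube) ≤
            ∫⁻ y, ENNReal.ofReal (dist y y₀ ^ r) ∂p
          rw [pushY_coe mY, lintegral_map hg.measurable mY]
          simp_rw [hge]
          exact le_rfl
      · rw [lfun_apply]
        simp [hle, hs]
  · rintro ⟨f, h, c, t⟩ u hu
    rw [lfun_apply]
    simp only [hmapX, hpush ν hνP]
    let φ : X → ℝ := fun x => f (eX x)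
    let ψ : Y → ℝ := fun y => h (eY y) + c * dist y y₀ ^ r
    have hφ : φ ∈ PhiR r x₀ := PhiR_comp heX.continuous f
    have hψ : ψ ∈ PhiR r y₀ := PhiR_add (PhiR_comp heY.continuous h) (PhiR_smul c (PhiR_dist hr0))
    have hψi : ∀ p ∈ Pr r y₀, ∫ y, ψ y ∂p = ∫ y, h (eY y) ∂p + c * M p := by
      intro p hp
      have := hp.1
      rw [integral_add (PhiR_integrable hr0 hp.2 (PhiR_comp heY.continuous h))
        ((integrable_distr hr0 hp.2).const_mul c), integral_const_mul, integral_distr hr0]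
    have hu' : ∀ x, ∀ p ∈ Pr r y₀, ∀ s : ℝ, 0 ≤ s →
        cb (jmap eX eY r y₀ (x, p)) ≤ ENNReal.ofReal s → φ x + ∫ y, ψ y ∂p + t * s ≤ u := by
      intro x p hp s hs hle
      have := hu _ ⟨x, p, hp, s, hs, hle, rfl⟩
      rw [lfun_apply] at this
      simp only [hD, hpush p hp] at this
      rw [hψi p hp]
      simp only [φ]
      linarith
    have hφint : Integrable φ μ := PhiR_integrable hr0 hμ hφ
    have hgoal : ∫ x, φ x ∂μ + ∫ y, ψ y ∂ν + t * a ≤ u := by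
      have hval : ∀ n : ℝ, ∫ x, n * (φ x + -u) ∂μ + ∫ y, n * ψ y ∂ν =
          n * (∫ x, φ x ∂μ + ∫ y, ψ y ∂ν - u) := by
        intro n
        rw [integral_const_mul, integral_const_mul, integral_add hφint (integrable_const _)]
        simp
        ring
      have hmem : ∀ n : ℝ, (fun x => n * (φ x + -u)) ∈ PhiR r x₀ := fun n =>
        PhiR_smul n (PhiR_add hφ (PhiR_const _))
      rcases lt_trichotomy t 0 with ht | ht | ht
      · have := hdual _ (hmem (-t)⁻¹) _ (PhiR_smul (-t)⁻¹ hψ) ?_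
        · rw [hval] at this
          have h0 : 0 < -t := by linarith
          rw [inv_mul_le_iff₀ h0] at this
          linarith
        · intro x p hp
          rw [integral_const_mul, ← mul_add]
          by_cases htop : cb (jmap eX eY r y₀ (x, p)) = ⊤
          · rw [htop]; exact le_top
          · rw [ENNReal.ofReal_le_iff_le_toReal htop]
            have h0 : 0 < -t := by linarith
            rw [inv_mul_le_iff₀ h0]
            have := hu' x p hp _ ENNReal.toReal_nonneg (ENNReal.ofReal_toReal htop).ge
            linarith
      · have hn : ∀ n : ℕ, (n : ℝ) * (∫ x, φ x ∂μ + ∫ y, ψ y ∂ν - u) ≤ a := by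
          intro n
          rw [← hval]
          refine hdual _ (hmem n) _ (PhiR_smul n hψ) ?_
          intro x p hp
          rw [integral_const_mul, ← mul_add]
          by_cases htop : cb (jmap eX eY r y₀ (x, p)) = ⊤
          · rw [htop]; exact le_top
          · have := hu' x p hp _ ENNReal.toReal_nonneg (ENNReal.ofReal_toReal htop).ge
            rw [ENNReal.ofReal_of_nonpos]
            · exact bot_le
            · rw [ht] at this
              exact mul_nonpos_of_nonneg_of_nonpos (Nat.cast_nonneg n) (by linarith)
        rw [ht]
        by_contra hcon
        have hpos : 0 < ∫ x, φ x ∂μ + ∫ y, ψ y ∂ν - u := by linarith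
        obtain ⟨n, hn'⟩ := exists_nat_gt (a / (∫ x, φ x ∂μ + ∫ y, ψ y ∂ν - u))
        rw [div_lt_iff₀ hpos] at hn'
        linarith [hn n]
      · exfalso
        have := hdual _ (PhiR_const (a + 1)) _ (PhiR_const 0) ?_
        · simp at this
          linarith
        · intro x p hp
          by_cases htop : cb (jmap eX eY r y₀ (x, p)) = ⊤
          · rw [htop]; exact le_top
          · exfalso
            set v := (cb (jmap eX eY r y₀ (x, p))).toReal with hv
            have hv0 : 0 ≤ v := ENNReal.toReal_nonneg
            set s := v + |u - φ x - ∫ y, ψ y ∂p| / t + 1 with hs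
            have hq : 0 ≤ |u - φ x - ∫ y, ψ y ∂p| / t := by positivity
            have h1 := hu' x p hp s (by linarith) (by
              rw [← ENNReal.ofReal_toReal htop]
              exact ENNReal.ofReal_le_ofReal (by linarith))
            have h2 : t * (|u - φ x - ∫ y, ψ y ∂p| / t) = |u - φ x - ∫ y, ψ y ∂p| := by
              field_simp
            have h3 := le_abs_self (u - φ x - ∫ y, ψ y ∂p)
            have h4 : t * s = t * v + t * (|u - φ x - ∫ y, ψ y ∂p| / t) + t := by rw [hs]; ring
            have h5 : 0 ≤ t * v := by positivity
            linarith
    rw [hψi ν hνP] at hgoal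
    simp only [φ] at hgoal
    linarith

end Core


section CBar

set_option linter.unusedSectionVars false

variable {X Y : Type*} [MeasurableSpace X] [MetricSpace X] [CompleteSpace X]
    [SecondCountableTopology X] [BorelSpace X]
    [MeasurableSpace Y] [MetricSpace Y] [CompleteSpace Y] [SecondCountableTopology Y]
    [BorelSpace Y]

lemma tendsto_pm_of_push {eY : Y → HCube} (heY : Topology.IsEmbedding eY)
    (ps : ℕ → ProbabilityMeasure Y) (p : ProbabilityMeasure Y)
    (h : Tendsto (fun n => pushY eY (ps n : Measure Y)) atTop (𝓝 (pushY eY (p : Measure Y)))) :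
    Tendsto ps atTop (𝓝 p) := by
  have mY : Measurable eY := heY.continuous.measurable
  refine tendsto_of_forall_isOpen_le_liminf' fun G hG => ?_
  obtain ⟨V, hV, rfl⟩ := heY.isOpen_iff.1 hG
  have h1 := ProbabilityMeasure.le_liminf_measure_open_of_tendsto h hV
  simp_rw [pushY_coe mY, Measure.map_apply mY hV.measurableSet] at h1
  exact h1

/-- The moment of a measure as a real number. -/
def momR (r : ℝ) (y₀ : Y) (p : Measure Y) : ℝ :=
  (∫⁻ y, ENNReal.ofReal (dist y y₀ ^ r) ∂p).toReal

lemma exists_cbar {eX : X → HCube} {eY : Y → HCube} (heX : Topology.IsEmbedding eX)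
    (heY : Topology.IsEmbedding eY) {r : ℝ} (hr : 1 ≤ r) (x₀ : X) (y₀ : Y)
    (C : X × Measure Y → EReal) (hlsc : LscWr r y₀ C)
    (K : ℝ) (hKpos : 0 < K)
    (hlb : ∀ x, ∀ p ∈ Pr r y₀,
      ((-(K * (1 + dist x x₀ ^ r + (Wr r p (Measure.dirac y₀) ^ r).toReal)) : ℝ) : EReal)
        ≤ C (x, p)) :
    ∃ cb : ZZ → ℝ≥0∞, LowerSemicontinuous cb ∧ ∀ x, ∀ p ∈ Pr r y₀,
      (cb (jmap eX eY r y₀ (x, p)) : EReal) =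
        C (x, p) + ((K * (1 + dist x x₀ ^ r + momR r y₀ p) : ℝ) : EReal) := by
  have hr0 : 0 ≤ r := by linarith
  let H : X → Measure Y → ℝ := fun x p => K * (1 + dist x x₀ ^ r + momR r y₀ p)
  have hnn : ∀ x, ∀ p ∈ Pr r y₀, 0 ≤ C (x, p) + (H x p : EReal) := by
    intro x p hp
    have := hp.1
    have h1 : (Wr r p (Measure.dirac y₀) ^ r).toReal ≤ momR r y₀ p :=
      ENNReal.toReal_mono hp.2.ne (Wr_dirac_le hr y₀ p)
    have h2 : ((-(H x p) : ℝ) : EReal) ≤ C (x, p) := by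
      refine le_trans ?_ (hlb x p hp)
      rw [EReal.coe_le_coe_iff]
      simp only [H]
      nlinarith
    calc (0 : EReal) = ((-(H x p) : ℝ) : EReal) + (H x p : EReal) := by
          rw [← EReal.coe_add]; simp
      _ ≤ _ := add_le_add_left h2 _
  let A := X × {p : Measure Y // p ∈ Pr r y₀}
  have key := exists_lsc_ext (A := A) (fun a => jmap eX eY r y₀ (a.1, a.2.1))
    (fun a => (C (a.1, a.2.1) + (H a.1 a.2.1 : EReal)).toENNReal) ?_
  · obtain ⟨cb, hcb, hcbe⟩ := key
    refine ⟨cb, hcb, fun x p hp => ?_⟩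
    rw [hcbe (x, ⟨p, hp⟩)]
    exact EReal.coe_toENNReal (hnn x p hp)
  · rintro ⟨x, p, hp⟩ as hlim t ht hle
    have hx : Tendsto (fun n => (as n).1) atTop (𝓝 x) := by
      rw [heX.tendsto_nhds_iff]
      exact (continuous_fst.tendsto _).comp hlim
    have hsnd := (continuous_snd.tendsto _).comp hlim
    have hpu : Tendsto (fun n => pushY eY (as n).2.1) atTop (𝓝 (pushY eY p)) :=
      (continuous_fst.tendsto _).comp hsnd
    have hmo : Tendsto (fun n => ∫⁻ y, ENNReal.ofReal (dist y y₀ ^ r) ∂(as n).2.1) atTop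
        (𝓝 (∫⁻ y, ENNReal.ofReal (dist y y₀ ^ r) ∂p)) :=
      (continuous_snd.tendsto _).comp hsnd
    have hw := tendsto_pm_of_push heY (fun n => ⟨(as n).2.1, (as n).2.2.1⟩) ⟨p, hp.1⟩ hpu
    have hW : WrTendsto r (fun n => (as n).2.1) p :=
      wrTendsto_of_tendsto hr y₀ (fun n => ⟨(as n).2.1, (as n).2.2.1⟩) ⟨p, hp.1⟩ hw hp.2.ne
        (fun n => (as n).2.2.2.ne) hmo
    have hC := hlsc x (fun n => (as n).1) p (fun n => (as n).2.1) hp (fun n => (as n).2.2) hx hW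
    have hmR : Tendsto (fun n => momR r y₀ (as n).2.1) atTop (𝓝 (momR r y₀ p)) :=
      (ENNReal.tendsto_toReal hp.2.ne).comp hmo
    have hdx : Tendsto (fun n => dist (as n).1 x₀ ^ r) atTop (𝓝 (dist x x₀ ^ r)) :=
      (((PhiR_dist (x₀ := x₀) hr0).1).tendsto x).comp hx
    have hH : Tendsto (fun n => H (as n).1 (as n).2.1) atTop (𝓝 (H x p)) :=
      ((tendsto_const_nhds.add hdx).add hmR).const_mul K
    have hup : ∀ n, C ((as n).1, (as n).2.1) ≤ ((t.toReal - H (as n).1 (as n).2.1 : ℝ) : EReal) := by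
      intro n
      have h1 : C ((as n).1, (as n).2.1) + (H (as n).1 (as n).2.1 : EReal) ≤ (t.toReal : EReal) := by
        rw [EReal.coe_ennreal_toReal ht, ← EReal.coe_toENNReal (hnn _ _ (as n).2.2)]
        exact EReal.coe_ennreal_le_coe_ennreal_iff.2 (hle n)
      rw [EReal.coe_sub]
      exact EReal.le_sub_iff_add_le (Or.inl (EReal.coe_ne_bot _)) (Or.inl (EReal.coe_ne_top _)) |>.2 h1
    have hlim2 : Tendsto (fun n => ((t.toReal - H (as n).1 (as n).2.1 : ℝ) : EReal)) atTop
        (𝓝 ((t.toReal - H x p : ℝ) : EReal)) :=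
      (continuous_coe_real_ereal.tendsto _).comp (tendsto_const_nhds.sub hH)
    have hfin : C (x, p) ≤ ((t.toReal - H x p : ℝ) : EReal) := by
      refine hC.trans ?_
      rw [← hlim2.liminf_eq]
      exact liminf_le_liminf (Eventually.of_forall hup)
    rw [EReal.coe_sub, EReal.le_sub_iff_add_le (Or.inl (EReal.coe_ne_bot _))
      (Or.inl (EReal.coe_ne_top _)), EReal.coe_ennreal_toReal ht] at hfin
    rw [← EReal.coe_ennreal_le_coe_ennreal_iff]
    exact (EReal.coe_toENNReal (hnn x p hp)).trans_le hfin

end CBar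


section Weak

set_option linter.unusedSectionVars false

variable {X Y : Type*} [MeasurableSpace X] [MetricSpace X] [CompleteSpace X]
    [SecondCountableTopology X] [BorelSpace X]
    [MeasurableSpace Y] [MetricSpace Y] [CompleteSpace Y] [SecondCountableTopology Y]
    [BorelSpace Y]

instance polishPMHCube : PolishSpace (ProbabilityMeasure HCube) := by
  let _ := TopologicalSpace.metrizableSpaceMetric (ProbabilityMeasure HCube)
  infer_instance

lemma measurable_momR (r : ℝ) (y₀ : Y) : Measurable (momR r y₀ : Measure Y → ℝ) :=
  (Measure.measurable_lintegral (measurable_distr r y₀)).ennreal_toReal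

/-- measurable version of the integral -/
def pint (ψ : Y → ℝ) (p : Measure Y) : ℝ :=
  (∫⁻ y, ENNReal.ofReal (ψ y) ∂p).toReal - (∫⁻ y, ENNReal.ofReal (-ψ y) ∂p).toReal

lemma ereal_cancel (a b : ℝ) (c : EReal) : ((a - b : ℝ) : EReal) + (c + (b : EReal)) = a + c := by
  rw [add_left_comm, ← EReal.coe_add, sub_add_cancel, add_comm]

lemma RC_aemeasurable {eX : X → HCube} {eY : Y → HCube} (heX : Topology.IsEmbedding eX)
    (heY : Topology.IsEmbedding eY) {r : ℝ} (hr : 1 ≤ r) (x₀ : X) (y₀ : Y)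
    (C : X × Measure Y → EReal) (K : ℝ) (cb : ZZ → ℝ≥0∞) (hcb : LowerSemicontinuous cb)
    (hcbe : ∀ x, ∀ p ∈ Pr r y₀,
      (cb (jmap eX eY r y₀ (x, p)) : EReal) =
        C (x, p) + ((K * (1 + dist x x₀ ^ r + momR r y₀ p) : ℝ) : EReal))
    (μ : Measure X) [IsProbabilityMeasure μ] {ψ : Y → ℝ} (hψ : ψ ∈ PhiR r y₀) :
    AEMeasurable (RC r y₀ C ψ) μ := by
  have hr0 : 0 ≤ r := by linarith
  have mX : Measurable eX := heX.continuous.measurable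
  have mY : MeasurableEmbedding eY := heY.continuous.measurableEmbedding heY.injective
  let G : X × Measure Y → EReal := fun xp =>
    ((-(pint ψ xp.2) - K * (1 + dist xp.1 x₀ ^ r + momR r y₀ xp.2) : ℝ) : EReal)
      + (cb (jmap eX eY r y₀ xp) : EReal)
  have hpm : Measurable (pint ψ) := measurable_pint hψ.1.measurable
  have hdm : Measurable fun x : X => dist x x₀ ^ r := (PhiR_dist (x₀ := x₀) hr0).1.measurable
  have hG : Measurable G := by
    refine Measurable.add (measurable_coe_real_ereal.comp ?_) (measurable_coe_ennreal_ereal.comp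
      (hcb.measurable.comp (measurable_jmap mX mY.measurable r y₀)))
    exact (hpm.comp measurable_snd).neg.sub (((measurable_const.add (hdm.comp measurable_fst)).add
      ((measurable_momR r y₀).comp measurable_snd)).const_mul K)
  have hGe : ∀ x, ∀ p ∈ Pr r y₀, G (x, p) = ((-∫ y, ψ y ∂p : ℝ) : EReal) + C (x, p) := by
    intro x p hp
    have := hp.1
    simp only [G]
    rw [hcbe x p hp, ereal_cancel, integral_eq_pint (PhiR_integrable hr0 hp.2 hψ)]
    rfl
  have hcomap : Measurable fun q : Measure HCube => q.comap eY := by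
    refine Measure.measurable_of_measurable_coe _ fun s hs => ?_
    simp_rw [mY.comap_apply]
    exact Measure.measurable_coe (mY.measurableSet_image.2 hs)
  have hc : Measurable fun xq : X × ProbabilityMeasure HCube =>
      (xq.1, (xq.2 : Measure HCube).comap eY) :=
    measurable_fst.prodMk (hcomap.comp (measurable_subtype_coe.comp measurable_snd))
  have hPr : MeasurableSet {p : Measure Y | p ∈ Pr r y₀} := by
    have : {p : Measure Y | p ∈ Pr r y₀} = (fun p : Measure Y => p univ) ⁻¹' {1} ∩
        (fun p : Measure Y => ∫⁻ y, ENNReal.ofReal (dist y y₀ ^ r) ∂p) ⁻¹' (Iio ⊤) := by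
      ext p
      exact and_congr isProbabilityMeasure_iff Iff.rfl
    rw [this]
    exact ((Measure.measurable_coe MeasurableSet.univ) (measurableSet_singleton 1)).inter
      ((Measure.measurable_lintegral (measurable_distr r y₀)) measurableSet_Iio)
  have hkey : ∀ a : EReal, NullMeasurableSet (RC r y₀ C ψ ⁻¹' Iio a) μ := by
    intro a
    let T : Set (X × ProbabilityMeasure HCube) := {xq | (xq.2 : Measure HCube).comap eY ∈ Pr r y₀ ∧
      G (xq.1, (xq.2 : Measure HCube).comap eY) < a}
    have hT : MeasurableSet T :=
      ((measurable_snd.comp hc) hPr).inter ((hG.comp hc) measurableSet_Iio)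
    have : RC r y₀ C ψ ⁻¹' Iio a = Prod.fst '' T := by
      ext x
      simp only [mem_preimage, mem_Iio, RC, iInf_lt_iff, mem_image, Prod.exists, exists_and_right,
        exists_eq_right]
      constructor
      · rintro ⟨p, hp, hlt⟩
        have := hp.1
        have he : (pushY eY p : Measure HCube).comap eY = p := by
          rw [pushY_coe mY.measurable, mY.comap_map]
        refine ⟨pushY eY p, ?_, ?_⟩
        · change (pushY eY p : Measure HCube).comap eY ∈ _
          rwa [he]
        · change G (x, (pushY eY p : Measure HCube).comap eY) < a
          rw [he, hGe x p hp]
          exact hlt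
      · rintro ⟨q, hq, hlt⟩
        exact ⟨_, hq, by rw [← hGe x _ hq]; exact hlt⟩
    rw [this]
    exact analytic_nullMeasurable μ (hT.analyticSet.image_of_continuous continuous_fst)
  have hnull : NullMeasurable (RC r y₀ C ψ) μ := measurable_of_Iio hkey
  exact hnull.aemeasurable

lemma integral_pint {r : ℝ} (hr : 1 ≤ r) {y₀ : Y} {μ : Measure X} {ν : Measure Y}
    [IsProbabilityMeasure ν] (hν : FinMom r y₀ ν) {P : Measure (X × Measure Y)}
    (hP : P ∈ Lambda μ ν) {ψ : Y → ℝ} (hψ : ψ ∈ PhiR r y₀) :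
    Integrable (fun xp => pint ψ xp.2) P ∧ ∫ xp, pint ψ xp.2 ∂P = ∫ y, ψ y ∂ν := by
  have hr0 : 0 ≤ r := by linarith
  have hi := PhiR_integrable hr0 hν hψ
  have hm := hψ.1.measurable
  have m1 : Measurable fun xp : X × Measure Y => ∫⁻ y, ENNReal.ofReal (ψ y) ∂xp.2 :=
    (Measure.measurable_lintegral hm.ennreal_ofReal).comp measurable_snd
  have m2 : Measurable fun xp : X × Measure Y => ∫⁻ y, ENNReal.ofReal (-ψ y) ∂xp.2 :=
    (Measure.measurable_lintegral hm.neg.ennreal_ofReal).comp measurable_snd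
  have e1 := Lambda_lintegral_snd hP hm.ennreal_ofReal
  have e2 := Lambda_lintegral_snd hP hm.neg.ennreal_ofReal
  have f1 : ∫⁻ xp, ∫⁻ y, ENNReal.ofReal (ψ y) ∂xp.2 ∂P ≠ ⊤ := by
    rw [e1]; exact hi.lintegral_lt_top.ne
  have f2 : ∫⁻ xp, ∫⁻ y, ENNReal.ofReal (-ψ y) ∂xp.2 ∂P ≠ ⊤ := by
    refine ne_of_eq_of_ne e2 ?_
    exact hi.neg.lintegral_lt_top.ne
  have i1 := integrable_toReal_of_lintegral_ne_top m1.aemeasurable f1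
  have i2 := integrable_toReal_of_lintegral_ne_top m2.aemeasurable f2
  refine ⟨i1.sub i2, ?_⟩
  unfold pint
  rw [integral_sub i1 i2, integral_toReal m1.aemeasurable (ae_lt_top m1 f1),
    integral_toReal m2.aemeasurable (ae_lt_top m2 f2), integral_eq_pint hi, e1]
  congr 2

lemma weak_duality {r : ℝ} (hr : 1 ≤ r) {y₀ : Y} {μ : Measure X} {ν : Measure Y}
    [IsProbabilityMeasure ν] (hν : FinMom r y₀ ν) {P : Measure (X × Measure Y)}
    (hP : P ∈ Lambda μ ν) {ψ : Y → ℝ} (hψ : ψ ∈ PhiR r y₀) (C : X × Measure Y → EReal)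
    (hR : AEMeasurable (RC r y₀ C ψ) μ) :
    ((∫ y, ψ y ∂ν : ℝ) : EReal) + eInt (RC r y₀ C ψ) μ ≤ eInt C P := by
  have hr0 : 0 ≤ r := by linarith
  obtain ⟨hi, he⟩ := integral_pint hr hν hP hψ
  obtain ⟨_, _, hfst, _⟩ := (mem_Lambda_iff _ _ _).1 hP
  have hR' : AEMeasurable (RC r y₀ C ψ) (P.map Prod.fst) := by rwa [hfst]
  have h1 : eInt (RC r y₀ C ψ) μ = eInt (fun xp => RC r y₀ C ψ xp.1) P := by
    have m1 : AEMeasurable (fun x => epos (RC r y₀ C ψ x)) (P.map Prod.fst) :=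
      measurable_epos.comp_aemeasurable hR'
    have m2 : AEMeasurable (fun x => epos (-(RC r y₀ C ψ x))) (P.map Prod.fst) :=
      measurable_epos.comp_aemeasurable hR'.neg
    unfold eInt
    rw [← hfst, lintegral_map' m1 measurable_fst.aemeasurable,
      lintegral_map' m2 measurable_fst.aemeasurable]
  rw [h1, ← he]
  refine (eInt_add_le (hR'.comp_measurable measurable_fst) hi).trans (eInt_mono_ae ?_)
  filter_upwards [Lambda_ae_Pr hP hν] with xp hp
  have := hp.1
  have h2 : RC r y₀ C ψ xp.1 ≤ ((-∫ y, ψ y ∂xp.2 : ℝ) : EReal) + C xp := iInf₂_le xp.2 hp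
  have h3 : pint ψ xp.2 = ∫ y, ψ y ∂xp.2 := (integral_eq_pint (PhiR_integrable hr0 hp.2 hψ)).symm
  rw [h3]
  refine (add_le_add_right h2 _).trans ?_
  rw [← add_assoc, ← EReal.coe_add, add_neg_cancel, EReal.coe_zero, zero_add]

lemma third_le_second {r : ℝ} (hr : 1 ≤ r) {x₀ : X} {y₀ : Y} {μ : Measure X} {ν : Measure Y}
    [IsProbabilityMeasure μ] (hμ : FinMom r x₀ μ) {φ : X → ℝ} (hφ : φ ∈ PhiR r x₀)
    {ψ : Y → ℝ} (C : X × Measure Y → EReal)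
    (hle : ∀ x, ∀ p ∈ Pr r y₀, ((φ x + ∫ y, ψ y ∂p : ℝ) : EReal) ≤ C (x, p)) :
    ((∫ x, φ x ∂μ + ∫ y, ψ y ∂ν : ℝ) : EReal) ≤
      ((∫ y, ψ y ∂ν : ℝ) : EReal) + eInt (RC r y₀ C ψ) μ := by
  have hr0 : 0 ≤ r := by linarith
  rw [add_comm, EReal.coe_add]
  refine add_le_add_right ?_ _
  rw [← eInt_real (PhiR_integrable hr0 hμ hφ) (Eventually.of_forall fun x => rfl)]
  refine eInt_mono_ae (Eventually.of_forall fun x => ?_)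
  refine le_iInf₂ fun p hp => ?_
  calc (φ x : EReal) = ((-∫ y, ψ y ∂p : ℝ) : EReal) + ((φ x + ∫ y, ψ y ∂p : ℝ) : EReal) := by
        rw [← EReal.coe_add]; congr 1; ring
    _ ≤ _ := add_le_add_right (hle x p hp) _

end Weak


section Strong

set_option linter.unusedSectionVars false

variable {X Y : Type*} [MeasurableSpace X] [MetricSpace X] [CompleteSpace X]
    [SecondCountableTopology X] [BorelSpace X]
    [MeasurableSpace Y] [MetricSpace Y] [CompleteSpace Y] [SecondCountableTopology Y]
    [BorelSpace Y]

lemma strong_duality {eX : X → HCube} {eY : Y → HCube} (heX : Topology.IsEmbedding eX)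
    (heY : Topology.IsEmbedding eY) {r : ℝ} (hr : 1 ≤ r) (x₀ : X) (y₀ : Y)
    (μ : Measure X) (ν : Measure Y) [IsProbabilityMeasure μ] [IsProbabilityMeasure ν]
    (hμ : FinMom r x₀ μ) (hν : FinMom r y₀ ν)
    (C : X × Measure Y → EReal) (K : ℝ) (cb : ZZ → ℝ≥0∞) (hcb : LowerSemicontinuous cb)
    (hcbe : ∀ x, ∀ p ∈ Pr r y₀,
      (cb (jmap eX eY r y₀ (x, p)) : EReal) =
        C (x, p) + ((K * (1 + dist x x₀ ^ r + momR r y₀ p) : ℝ) : EReal))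
    (b : ℝ)
    (hb : ∀ φ ∈ PhiR r x₀, ∀ ψ ∈ PhiR r y₀,
      (∀ x, ∀ p ∈ Pr r y₀, ((φ x + ∫ y, ψ y ∂p : ℝ) : EReal) ≤ C (x, p)) →
      ∫ x, φ x ∂μ + ∫ y, ψ y ∂ν ≤ b) :
    ∃ P ∈ Lambda μ ν, eInt C P ≤ b := by
  have hr0 : 0 ≤ r := by linarith
  have mX : Measurable eX := heX.continuous.measurable
  have mY : Measurable eY := heY.continuous.measurable
  set H0 : ℝ := K * (1 + ∫ x, dist x x₀ ^ r ∂μ + ∫ y, dist y y₀ ^ r ∂ν) with hH0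
  have hdual : ∀ φ ∈ PhiR r x₀, ∀ ψ ∈ PhiR r y₀,
      (∀ x, ∀ p ∈ Pr r y₀, ENNReal.ofReal (φ x + ∫ y, ψ y ∂p) ≤ cb (jmap eX eY r y₀ (x, p))) →
      ∫ x, φ x ∂μ + ∫ y, ψ y ∂ν ≤ b + H0 := by
    intro φ hφ ψ hψ hle
    have hψi : ∀ p ∈ Pr r y₀, ∫ y, (ψ y + (-K) * dist y y₀ ^ r) ∂p =
        ∫ y, ψ y ∂p + (-K) * ∫ y, dist y y₀ ^ r ∂p := by
      intro p hp
      have := hp.1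
      rw [integral_add (PhiR_integrable hr0 hp.2 hψ) ((integrable_distr hr0 hp.2).const_mul _),
        integral_const_mul]
    have h1 := hb (fun x => φ x + (-K) * (1 + dist x x₀ ^ r))
      (PhiR_add hφ (PhiR_smul (-K) (PhiR_add (PhiR_const 1) (PhiR_dist hr0))))
      (fun y => ψ y + (-K) * dist y y₀ ^ r) (PhiR_add hψ (PhiR_smul (-K) (PhiR_dist hr0))) ?_
    · rw [hψi ν ⟨inferInstance, hν⟩, integral_add (PhiR_integrable hr0 hμ hφ)
        (PhiR_integrable hr0 hμ (PhiR_smul (-K) (PhiR_add (PhiR_const 1) (PhiR_dist hr0)))), integral_const_mul,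
        integral_add (integrable_const _) (integrable_distr hr0 hμ)] at h1
      simp only [integral_const, probReal_univ, smul_eq_mul, mul_one] at h1
      rw [hH0]
      linarith
    · intro x p hp
      have h2 : ((φ x + ∫ y, ψ y ∂p : ℝ) : EReal) ≤
          C (x, p) + ((K * (1 + dist x x₀ ^ r + momR r y₀ p) : ℝ) : EReal) := by
        rw [← hcbe x p hp]
        refine le_trans ?_ (EReal.coe_ennreal_le_coe_ennreal_iff.2 (hle x p hp))
        rw [EReal.coe_ennreal_ofReal]
        exact EReal.coe_le_coe_iff.2 (le_max_left _ _)
      rw [← EReal.sub_le_iff_le_add (Or.inl (EReal.coe_ne_bot _)) (Or.inl (EReal.coe_ne_top _)),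
        ← EReal.coe_sub] at h2
      refine le_trans (le_of_eq ?_) h2
      rw [hψi p hp, integral_distr hr0]
      congr 1
      unfold momR
      ring
  have ha : 0 ≤ b + H0 := by
    have := hdual _ (PhiR_const 0) _ (PhiR_const 0) (fun x p hp => by simp)
    simpa using this
  obtain ⟨P, hP, hPle⟩ := core_exists heX heY hr x₀ y₀ μ ν hμ hν cb hcb (b + H0) hdual
  refine ⟨P, hP, ?_⟩
  obtain ⟨_, _, hfst, _⟩ := (mem_Lambda_iff _ _ _).1 hP
  have hcm : Measurable fun xp => cb (jmap eX eY r y₀ xp) :=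
    hcb.measurable.comp (measurable_jmap mX mY r y₀)
  have hne : ∫⁻ xp, cb (jmap eX eY r y₀ xp) ∂P ≠ ⊤ := (hPle.trans_lt ENNReal.ofReal_lt_top).ne
  have i1 := integrable_toReal_of_lintegral_ne_top hcm.aemeasurable hne
  have e1 := integral_toReal hcm.aemeasurable (ae_lt_top hcm hne)
  have i2' : Integrable (fun x => dist x x₀ ^ r) (P.map Prod.fst) := by
    rw [hfst]; exact integrable_distr hr0 hμ
  have i2 : Integrable (fun xp : X × Measure Y => dist xp.1 x₀ ^ r) P :=
    i2'.comp_measurable measurable_fst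
  have e2 : ∫ xp : X × Measure Y, dist xp.1 x₀ ^ r ∂P = ∫ x, dist x x₀ ^ r ∂μ := by
    rw [← hfst, integral_map measurable_fst.aemeasurable i2'.aestronglyMeasurable]
  have m3 : Measurable fun xp : X × Measure Y => ∫⁻ y, ENNReal.ofReal (dist y y₀ ^ r) ∂xp.2 :=
    (Measure.measurable_lintegral (measurable_distr r y₀)).comp measurable_snd
  have l3 := Lambda_lintegral_snd hP (measurable_distr r y₀)
  have n3 : ∫⁻ xp, ∫⁻ y, ENNReal.ofReal (dist y y₀ ^ r) ∂xp.2 ∂P ≠ ⊤ := by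
    rw [l3]; exact hν.ne
  have i3 : Integrable (fun xp : X × Measure Y => momR r y₀ xp.2) P :=
    integrable_toReal_of_lintegral_ne_top m3.aemeasurable n3
  have e3 : ∫ xp : X × Measure Y, momR r y₀ xp.2 ∂P = ∫ y, dist y y₀ ^ r ∂ν := by
    rw [integral_distr hr0, ← l3]
    exact integral_toReal m3.aemeasurable (ae_lt_top m3 n3)
  have i4 : Integrable (fun xp : X × Measure Y =>
      K * (1 + dist xp.1 x₀ ^ r + momR r y₀ xp.2)) P :=
    (((integrable_const 1).add i2).add i3).const_mul K
  have e4 : ∫ xp : X × Measure Y, K * (1 + dist xp.1 x₀ ^ r + momR r y₀ xp.2) ∂P = H0 := by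
    have i5 : Integrable (fun xp : X × Measure Y => 1 + dist xp.1 x₀ ^ r) P :=
      (integrable_const 1).add i2
    rw [integral_const_mul, integral_add i5 i3, integral_add (integrable_const _) i2, e2, e3]
    simp [hH0]
  rw [eInt_real (i1.sub i4) ?_]
  · rw [EReal.coe_le_coe_iff]
    have : ∫ xp, ((fun xp => (cb (jmap eX eY r y₀ xp)).toReal) - fun xp : X × Measure Y =>
        K * (1 + dist xp.1 x₀ ^ r + momR r y₀ xp.2)) xp ∂P = _ := integral_sub i1 i4
    rw [this, e1, e4]
    have := ENNReal.toReal_le_of_le_ofReal ha hPle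
    linarith
  · filter_upwards [Lambda_ae_Pr hP hν, ae_lt_top hcm hne] with xp hp hlt
    have h1 := hcbe xp.1 xp.2 hp
    have h2 := ereal_cancel 0 (K * (1 + dist xp.1 x₀ ^ r + momR r y₀ xp.2)) (C (xp.1, xp.2))
    rw [← h1, ← EReal.coe_ennreal_toReal hlt.ne, ← EReal.coe_add, EReal.coe_zero, zero_add] at h2
    rw [← Prod.mk.eta (p := xp), ← h2]
    congr 1
    simp only [Pi.sub_apply]
    ring

end Strong


/-- duality for the relaxed weak transport problem (Theorem `thm:duality`). -/
theorem statement5 {X Y : Type*}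
    [MeasurableSpace X] [MetricSpace X] [CompleteSpace X] [SecondCountableTopology X]
    [BorelSpace X]
    [MeasurableSpace Y] [MetricSpace Y] [CompleteSpace Y] [SecondCountableTopology Y]
    [BorelSpace Y]
    (r : ℝ) (hr : 1 ≤ r) (x₀ : X) (y₀ : Y)
    (μ : Measure X) (ν : Measure Y) [IsProbabilityMeasure μ] [IsProbabilityMeasure ν]
    (hμ : FinMom r x₀ μ) (hν : FinMom r y₀ ν)
    (C : X × Measure Y → EReal) (hbot : ∀ z, C z ≠ ⊥) (hlsc : LscWr r y₀ C)
    (K : ℝ) (hKpos : 0 < K)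
    (hlb : ∀ x, ∀ p ∈ Pr r y₀,
      ((-(K * (1 + dist x x₀ ^ r + (Wr r p (Measure.dirac y₀) ^ r).toReal)) : ℝ) : EReal)
        ≤ C (x, p)) :
    sInf {v : EReal | ∃ P ∈ Lambda μ ν, v = eInt C P}
      = sSup {v : EReal | ∃ ψ ∈ PhiR r y₀,
          v = ((∫ y, ψ y ∂ν : ℝ) : EReal) + eInt (RC r y₀ C ψ) μ} ∧
    sInf {v : EReal | ∃ P ∈ Lambda μ ν, v = eInt C P}
      = sSup {v : EReal | ∃ φ ∈ PhiR r x₀, ∃ ψ ∈ PhiR r y₀,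
          (∀ x, ∀ p ∈ Pr r y₀, ((φ x + ∫ y, ψ y ∂p : ℝ) : EReal) ≤ C (x, p)) ∧
          v = ((∫ x, φ x ∂μ + ∫ y, ψ y ∂ν : ℝ) : EReal)} := by

  obtain ⟨eX, heX⟩ := Metric.PiNatEmbed.exists_embedding_to_hilbert_cube (X := X)
  obtain ⟨eY, heY⟩ := Metric.PiNatEmbed.exists_embedding_to_hilbert_cube (X := Y)
  obtain ⟨cb, hcb, hcbe⟩ := exists_cbar heX heY hr x₀ y₀ C hlsc K hKpos hlb
  set A := sInf {v : EReal | ∃ P ∈ Lambda μ ν, v = eInt C P} with hA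
  set B := sSup {v : EReal | ∃ ψ ∈ PhiR r y₀,
          v = ((∫ y, ψ y ∂ν : ℝ) : EReal) + eInt (RC r y₀ C ψ) μ} with hB
  set D := sSup {v : EReal | ∃ φ ∈ PhiR r x₀, ∃ ψ ∈ PhiR r y₀,
          (∀ x, ∀ p ∈ Pr r y₀, ((φ x + ∫ y, ψ y ∂p : ℝ) : EReal) ≤ C (x, p)) ∧
          v = ((∫ x, φ x ∂μ + ∫ y, ψ y ∂ν : ℝ) : EReal)} with hD
  have h1 : B ≤ A := by
    refine sSup_le ?_
    rintro v ⟨ψ, hψ, rfl⟩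
    refine le_sInf ?_
    rintro w ⟨P, hP, rfl⟩
    exact weak_duality hr hν hP hψ C (RC_aemeasurable heX heY hr x₀ y₀ C K cb hcb hcbe μ hψ)
  have h2 : D ≤ B := by
    refine sSup_le ?_
    rintro v ⟨φ, hφ, ψ, hψ, hle, rfl⟩
    exact (third_le_second hr hμ hφ C hle).trans (le_sSup ⟨ψ, hψ, rfl⟩)
  have h3 : A ≤ D := by
    refine EReal.le_of_forall_lt_iff_le.1 fun b hDb => ?_
    obtain ⟨P, hP, hle⟩ := strong_duality heX heY hr x₀ y₀ μ ν hμ hν C K cb hcb hcbe b (by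
      intro φ hφ ψ hψ hfe
      rw [← EReal.coe_le_coe_iff]
      have hv : ((∫ x, φ x ∂μ + ∫ y, ψ y ∂ν : ℝ) : EReal) ≤ D :=
        le_sSup ⟨φ, hφ, ψ, hψ, hfe, rfl⟩
      exact hv.trans hDb.le)
    have hw : A ≤ eInt C P := sInf_le ⟨P, hP, rfl⟩
    exact hw.trans hle
  exact ⟨le_antisymm (h3.trans h2) h1, le_antisymm h3 (h2.trans h1)⟩
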